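/- Let r be a positive integer and let ε > 0. There exists a constant C = C(r, ε) such that the following holds. Let p be a prime, let K, M, N be real numbers with 1 < K, M, N < p and M > 4·p^{1/(2r)}, let a, b be integers with p ∤ ab, let χ be a non-trivial multiplicative character modulo p, and let β = (β_{k,n}) be complex numbers indexed by pairs of positive integers with |β_{k,n}| ≤ 1 for all k, n. Then |∑_{1 ≤ k ≤ K} ∑_{1 ≤ m ≤ M} ∑_{1 ≤ n ≤ N} β_{k,n} · χ(a·k + b·m·n)| ≤ C · p^ε · K·M·N · Δ₁, where Δ₁ = (1 + N/K)^{1/(2r)} · (1 + (|a|·K + |b|·M·N)·M·N·p^{-1-1/(2r)})^{1/(2r)} · (p^{1+1/r}/(M⁴·N⁴))^{1/(4r)}. -/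

import Mathlib

open Finset

/-!
Fix integers `U`, `V` of sizes `M p ^ (-1 / (2 r))` and `p ^ (1 / (2 r))`. Replacing `m` by
`m - u v` with `u ≤ U`, `v ≤ V` and averaging over the shifts gives a sum over `(k, m, n, u)` of
the incomplete sums `∑_v χ(y - v)` at `y = (a k + b m n) / (b u n)`. The summation range of `v`
depends on `m` and `u`, so it is absorbed into a maximal function of partial sums.
Hölder's inequality separates two quantities. The first is the number of pairs of quadruples
giving the same `y`: the divisor bound shows it is almost diagonal. The second is the complete
`2 r`-th moment of the maximal function over `y` modulo `p`: a dyadic decomposition reduces it to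
moments of `∑_v χ(y - v)`, which are controlled by square-root cancellation in the complete sums
`∑_y χ(f y)`.

Square-root cancellation is obtained elementarily. Stepanov's method bounds the analogous sums
over the extensions of `ZMod p`, and the rationality of the associated L-function turns this into a
bound of its reciprocal zeros, hence of the sum over `ZMod p` itself.
-/

namespace CharSum

section Stepanov

open Polynomial

theorem exists_mul_add_mul_eq_of_coprime {d D : ℕ} (hd : 0 < d) (hD : D.Coprime d) {n : ℕ}
    (hn : (d - 1) * D ≤ n) : ∃ a e : ℕ, d * a + D * e = n := by
  obtain ⟨y, -, hy⟩ := Nat.exists_mul_mod_eq_of_coprime n hD hd.ne'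
  have hmod : D * (y % d) ≡ n [MOD d] := ((Nat.mod_modEq y d).mul_left D).trans hy
  have hle : D * (y % d) ≤ n := by
    refine le_trans ?_ hn
    rw [mul_comm]
    exact Nat.mul_le_mul_right _ (Nat.le_sub_one_of_lt (Nat.mod_lt y hd))
  obtain ⟨a, ha⟩ := (Nat.modEq_iff_dvd' hle).1 hmod
  exact ⟨a, y % d, by omega⟩

theorem eq_and_eq_of_mul_add_mul_eq {d D : ℕ} (hD : D.Coprime d) {a k a' k' : ℕ} (hk : k < d)
    (hk' : k' < d) (h : d * a + D * k = d * a' + D * k') : a = a' ∧ k = k' := by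
  have hmod : D * k ≡ D * k' [MOD d] := by
    simpa [Nat.ModEq, Nat.mul_add_mod] using congrArg (· % d) h
  obtain rfl : k = k' := (Nat.ModEq.cancel_left_of_coprime hD.symm hmod).eq_of_lt_of_lt hk hk'
  exact ⟨Nat.eq_of_mul_eq_mul_left (by omega) (Nat.add_right_cancel h), rfl⟩

variable {K : Type*} [Field K] {f : K[X]} {d : ℕ}

/-- The coordinate at `y ^ k` of the function `x ^ a * y ^ e` on the curve `y ^ d = f(x)`, with
respect to the basis `1, y, …, y ^ (d - 1)` over `K[x]`. -/
noncomputable def monomialCoord (f : K[X]) (d a e k : ℕ) : K[X] :=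
  if e % d = k then X ^ a * f ^ (e / d) else 0

theorem monomialCoord_of_mod_eq {a e k : ℕ} (h : e % d = k) :
    monomialCoord f d a e k = X ^ a * f ^ (e / d) := if_pos h

theorem monomialCoord_of_mod_ne {a e k : ℕ} (h : e % d ≠ k) : monomialCoord f d a e k = 0 :=
  if_neg h

theorem sum_eval_monomialCoord_mul_pow (hd : 0 < d) (a e : ℕ) {x y : K}
    (hxy : y ^ d = f.eval x) :
    ∑ k ∈ range d, (monomialCoord f d a e k).eval x * y ^ k = x ^ a * y ^ e := by
  rw [sum_eq_single_of_mem (e % d) (mem_range.2 (Nat.mod_lt _ hd))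
    fun k _ hk => by rw [monomialCoord_of_mod_ne hk.symm, eval_zero, zero_mul]]
  rw [monomialCoord_of_mod_eq rfl, eval_mul, eval_pow, eval_pow, eval_X, ← hxy, ← pow_mul,
    mul_assoc, ← pow_add, Nat.div_add_mod]

/-- At the point at infinity `x` has a pole of order `d` and `y` one of order `natDegree f`. -/
theorem mul_natDegree_monomialCoord_add (hf : f ≠ 0) {a e k : ℕ} (h : e % d = k) :
    d * (monomialCoord f d a e k).natDegree + f.natDegree * k = d * a + f.natDegree * e := by
  rw [monomialCoord_of_mod_eq h, natDegree_mul (pow_ne_zero _ X_ne_zero) (pow_ne_zero _ hf),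
    natDegree_X_pow, natDegree_pow, ← h]
  conv_rhs => rw [← Nat.div_add_mod e d]
  ring

section Family

variable {ι : Type*} [Fintype ι] (a e : ι → ℕ) (c : ι → K)

/-- The coordinate at `y ^ k` of the function `∑ i, c i * x ^ a i * y ^ e i` on the curve
`y ^ d = f(x)`, with respect to the basis `1, y, …, y ^ (d - 1)` over `K[x]`. -/
noncomputable def curveCoord (f : K[X]) (d : ℕ) (a e : ι → ℕ) (c : ι → K) (k : ℕ) : K[X] :=
  ∑ i, C (c i) * monomialCoord f d (a i) (e i) k

theorem sum_eval_curveCoord_mul_pow (hd : 0 < d) {x y : K} (hxy : y ^ d = f.eval x) :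
    ∑ k ∈ range d, (curveCoord f d a e c k).eval x * y ^ k
      = ∑ i, c i * (x ^ a i * y ^ e i) := by
  simp only [curveCoord, eval_finsetSum, eval_mul, eval_C, sum_mul]
  rw [sum_comm]
  refine sum_congr rfl fun i _ => ?_
  rw [← sum_eval_monomialCoord_mul_pow hd (a i) (e i) hxy, mul_sum]
  exact sum_congr rfl fun k _ => mul_assoc _ _ _

variable {a e c}

theorem coeff_curveCoord_eq_zero (hf : f ≠ 0) {N : ℕ}
    (hN : ∀ i, d * a i + f.natDegree * e i ≤ N) {m k : ℕ} (hm : N < d * m + f.natDegree * k) :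
    (curveCoord f d a e c k).coeff m = 0 := by
  simp only [curveCoord, finsetSum_coeff, coeff_C_mul]
  refine sum_eq_zero fun i _ => ?_
  by_cases h : e i % d = k
  · have hdeg := mul_natDegree_monomialCoord_add hf (a := a i) h
    rw [coeff_eq_zero_of_natDegree_lt, mul_zero]
    exact lt_of_mul_lt_mul_left (by have := hN i; omega) (Nat.zero_le d)
  · rw [monomialCoord_of_mod_ne h, coeff_zero, mul_zero]

theorem mul_natDegree_curveCoord_le (hf : f ≠ 0) {N : ℕ}
    (hN : ∀ i, d * a i + f.natDegree * e i ≤ N) (k : ℕ) :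
    d * (curveCoord f d a e c k).natDegree ≤ N := by
  by_contra! h
  have hlead : (curveCoord f d a e c k).leadingCoeff = 0 :=
    coeff_curveCoord_eq_zero hf hN (h.trans_le (Nat.le_add_right _ _))
  rw [leadingCoeff_eq_zero.1 hlead, natDegree_zero] at h
  omega

theorem exists_curveCoord_eq_zero (hd : 0 < d) (hD : f.natDegree.Coprime d) (hf : f ≠ 0) {N : ℕ}
    (hN : ∀ i, d * a i + f.natDegree * e i ≤ N) (hcard : N + 1 < Fintype.card ι) :
    ∃ c : ι → K, c ≠ 0 ∧ ∀ k < d, curveCoord f d a e c k = 0 := by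
  set R : Finset (ℕ × ℕ) := {t ∈ range (N + 1) ×ˢ range d | d * t.1 + f.natDegree * t.2 ≤ N}
  have hRcard : #R ≤ N + 1 := by
    rw [← card_range (N + 1)]
    refine card_le_card_of_injOn (fun t => d * t.1 + f.natDegree * t.2) (fun t ht => ?_)
      fun t ht t' ht' h => ?_
    · exact mem_range.2 (Nat.lt_succ_of_le (mem_filter.1 ht).2)
    · have hk := (mem_product.1 (mem_filter.1 ht).1).2
      have hk' := (mem_product.1 (mem_filter.1 ht').1).2
      have := eq_and_eq_of_mul_add_mul_eq hD (mem_range.1 hk) (mem_range.1 hk') h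
      exact Prod.ext this.1 this.2
  let coeffs : (ι → K) →ₗ[K] (R → K) :=
    { toFun := fun c t => (curveCoord f d a e c t.1.2).coeff t.1.1
      map_add' := fun c c' => by
        ext t; simp [curveCoord, add_mul, sum_add_distrib]
      map_smul' := fun u c => by
        ext t; simp [curveCoord, mul_sum, mul_assoc] }
  have hker : LinearMap.ker coeffs ≠ ⊥ := by
    apply LinearMap.ker_ne_bot_of_finrank_lt
    simpa using hRcard.trans_lt hcard
  obtain ⟨c, hc, hc0⟩ := (Submodule.ne_bot_iff _).1 hker
  refine ⟨c, hc0, fun k hk => ?_⟩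
  ext m
  rw [coeff_zero]
  by_cases hm : d * m + f.natDegree * k ≤ N
  · have hmem : (m, k) ∈ R := by
      have : m ≤ d * m := Nat.le_mul_of_pos_left m hd
      exact mem_filter.2 ⟨mem_product.2 ⟨mem_range.2 (by omega), mem_range.2 hk⟩, hm⟩
    exact congrFun (LinearMap.mem_ker.1 hc) ⟨(m, k), hmem⟩
  · exact coeff_curveCoord_eq_zero hf hN (not_le.1 hm)

theorem curveCoord_ne_zero (hf : f ≠ 0)
    (hinj : Function.Injective fun i => d * a i + f.natDegree * e i) {i : ι} (hi : c i ≠ 0) :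
    curveCoord f d a e c (e i % d) ≠ 0 := by
  set k := e i % d
  have hweight : ∀ j, C (c j) * monomialCoord f d (a j) (e j) k ≠ 0 →
      d * (C (c j) * monomialCoord f d (a j) (e j) k).natDegree + f.natDegree * k
        = d * a j + f.natDegree * e j := fun j hj => by
    have hmod : e j % d = k := by
      by_contra h; exact hj (by rw [monomialCoord_of_mod_ne h, mul_zero])
    rw [natDegree_C_mul (C_ne_zero.1 (left_ne_zero_of_mul hj)),
      mul_natDegree_monomialCoord_add hf hmod]
  have hdisj : Set.Pairwise {j | j ∈ univ ∧ C (c j) * monomialCoord f d (a j) (e j) k ≠ 0}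
      (Function.onFun (· ≠ ·)
        (degree ∘ fun j => C (c j) * monomialCoord f d (a j) (e j) k)) :=
    fun j hj j' hj' hne hdeg => hne <| hinj <| by
      simp only [← hweight j hj.2, ← hweight j' hj'.2]
      rw [natDegree_eq_natDegree hdeg]
  have hterm : C (c i) * monomialCoord f d (a i) (e i) k ≠ 0 := by
    rw [monomialCoord_of_mod_eq rfl]
    exact mul_ne_zero (C_ne_zero.2 hi) (mul_ne_zero (pow_ne_zero _ X_ne_zero) (pow_ne_zero _ hf))
  intro hzero
  rw [curveCoord, ← degree_eq_bot, degree_sum_eq_of_disjoint _ _ hdisj, Finset.sup_eq_bot_iff]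
    at hzero
  exact hterm (degree_eq_bot.1 (hzero i (mem_univ i)))

end Family

theorem eq_zero_of_forall_sum_mul_pow_eq_zero {ζ : K} (hζ : IsPrimitiveRoot ζ d) {u : K}
    (hu : u ≠ 0) {g : ℕ → K} (h : ∀ y, y ^ d = u ^ d → ∑ k ∈ range d, g k * y ^ k = 0) {k : ℕ}
    (hk : k < d) : g k = 0 := by
  set P : K[X] := ∑ k ∈ range d, C (g k) * X ^ k
  have hP : P = 0 := by
    refine eq_zero_of_natDegree_lt_card_of_eval_eq_zero P (f := fun i : Fin d => ζ ^ (i : ℕ) * u)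
      (fun i j hij => Fin.ext (hζ.pow_inj i.2 j.2 (mul_right_cancel₀ hu hij))) (fun i => ?_) ?_
    · simp only [P, eval_finsetSum, eval_mul, eval_C, eval_pow, eval_X]
      refine h _ ?_
      rw [mul_pow, ← pow_mul, mul_comm (i : ℕ), pow_mul, hζ.pow_eq_one, one_pow, one_mul]
    · rw [Fintype.card_fin]
      refine (natDegree_sum_le_of_forall_le (n := d - 1) _ _ fun j hj => ?_).trans_lt (by omega)
      exact (natDegree_C_mul_X_pow_le _ _).trans (Nat.le_sub_one_of_lt (mem_range.1 hj))
  simpa [P, finsetSum_coeff, coeff_C_mul, coeff_X_pow, hk] using congrArg (coeff · k) hP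

variable [Fintype K]

theorem exists_isPrimitiveRoot_of_dvd_card_sub_one (h : d ∣ Fintype.card K - 1) :
    ∃ ζ : K, IsPrimitiveRoot ζ d := by
  classical
  obtain ⟨g, hg⟩ := IsCyclic.exists_ofOrder_eq_natCard (α := Kˣ)
  rw [Nat.card_eq_fintype_card, Fintype.card_units] at hg
  obtain ⟨m, hm⟩ := h
  have hpos : 0 < Fintype.card K - 1 := Nat.sub_pos_of_lt Fintype.one_lt_card
  refine ⟨(g ^ m : Kˣ), IsPrimitiveRoot.coe_units_iff.2 ?_⟩
  exact (hg ▸ IsPrimitiveRoot.orderOf g).pow hpos (by rw [hm, mul_comm])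

/-- The number of points `x` at which the value of `f` is a nonzero `d`-th power. -/
def powValueCount [DecidableEq K] (f : K[X]) (d : ℕ) : ℕ :=
  #{x : K | f.eval x ≠ 0 ∧ ∃ y, y ^ d = f.eval x}

/-- The number of units which are `d`-th powers. -/
def unitPowCount (K : Type*) [Field K] [Fintype K] [DecidableEq K] (d : ℕ) : ℕ :=
  #{v : Kˣ | ∃ y : K, y ^ d = v}

theorem powValueCount_le_natDegree [DecidableEq K] (hdK : d ∣ Fintype.card K - 1) {k : ℕ}
    (hk : k < d) {F : ℕ → K[X]} (hF : F k ≠ 0)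
    (h : ∀ x y : K, y ^ d = f.eval x → ∑ k ∈ range d, (F k).eval x * y ^ k = 0) :
    powValueCount f d ≤ (F k).natDegree := by
  obtain ⟨ζ, hζ⟩ := exists_isPrimitiveRoot_of_dvd_card_sub_one hdK
  refine card_le_degree_of_subset_roots fun x hx => ?_
  obtain ⟨-, hx0, u, hu⟩ := mem_filter.1 hx
  rw [mem_roots hF, IsRoot]
  refine eq_zero_of_forall_sum_mul_pow_eq_zero hζ (u := u) (fun hu0 => ?_)
    (fun y hy => h x y (hy.trans hu)) hk
  rw [hu0, zero_pow (Nat.ne_zero_of_lt hk)] at hu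
  exact hx0 hu.symm

theorem sum_mul_pow_mul_pow_card {p n s : ℕ} [ExpChar K p] (hs : s = p ^ n)
    (hK : Fintype.card K = s ^ 2) {ι : Type*} [Fintype ι] (c u v : ι → K) :
    (∑ i, c i * (u i ^ s * v i)) ^ s = ∑ i, c i ^ s * (u i * v i ^ s) := by
  have hfrob : ∀ w : K, (w ^ s) ^ s = w := fun w => by
    rw [← pow_mul, ← sq, ← hK, FiniteField.pow_card]
  conv_lhs => rw [hs, sum_pow_char_pow, ← hs]
  exact sum_congr rfl fun i _ => by rw [mul_pow, mul_pow, hfrob]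

theorem sum_eval_curveCoord_pow_card_eq_zero {p n s : ℕ} [ExpChar K p] (hs : s = p ^ n)
    (hK : Fintype.card K = s ^ 2) (hd : 0 < d) {ι : Type*} [Fintype ι] {a a' e e' : ι → ℕ}
    {c : ι → K} (hc : ∀ k < d,
      curveCoord f d (fun i => a i * s + a' i) (fun i => e i * s + e' i) c k = 0)
    {x y : K} (hxy : y ^ d = f.eval x) :
    ∑ k ∈ range d, (curveCoord f d (fun i => a i + a' i * s) (fun i => e i + e' i * s)
      (fun i => c i ^ s) k).eval x * y ^ k = 0 := by
  have hzero := sum_eval_curveCoord_mul_pow (fun i => a i * s + a' i) (fun i => e i * s + e' i) c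
    hd hxy
  rw [sum_eq_zero fun k hk => by rw [hc k (mem_range.1 hk), eval_zero, zero_mul]] at hzero
  have hpow := sum_mul_pow_mul_pow_card hs hK c (fun i => x ^ a i * y ^ e i)
    (fun i => x ^ a' i * y ^ e' i)
  rw [sum_eval_curveCoord_mul_pow _ _ _ hd hxy]
  refine (sum_congr rfl fun i _ => by ring).trans (hpow.symm.trans ?_)
  have hs0 : s ≠ 0 := by
    rintro rfl
    exact Fintype.card_ne_zero hK
  rw [← zero_pow (M₀ := K) hs0, hzero]
  congr 1
  exact sum_congr rfl fun i _ => by ring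

theorem exists_forall_mul_add_mul_eq {D G : ℕ} (hd : 0 < d) (hD : D.Coprime d)
    (hG : (d - 1) * D ≤ G) : ∃ a e : ℕ → ℕ, ∀ n, G ≤ n → d * a n + D * e n = n := by
  have hpole : ∀ n, ∃ a e : ℕ, G ≤ n → d * a + D * e = n := fun n => by
    by_cases hn : G ≤ n
    · obtain ⟨a, e, h⟩ := exists_mul_add_mul_eq_of_coprime hd hD (hG.trans hn)
      exact ⟨a, e, fun _ => h⟩
    · exact ⟨0, 0, fun h => absurd h hn⟩
  choose a e hae using hpole
  exact ⟨a, e, hae⟩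

theorem lt_card_Icc_product_Icc {s G : ℕ} (hGs : G ^ 2 + 3 * G + 1 < s) :
    (s - 1) * s + (s + 2 * G) + 1 < #(Icc G (s - 1) ×ˢ Icc G (s + 2 * G)) := by
  rw [card_product, Nat.card_Icc, Nat.card_Icc]
  obtain ⟨t, rfl⟩ := Nat.exists_eq_add_of_lt hGs
  have h₁ : G ^ 2 + 3 * G + 1 + t + 1 - 1 + 1 - G = G ^ 2 + 2 * G + t + 2 := by omega
  have h₂ : G ^ 2 + 3 * G + 1 + t + 1 + 2 * G + 1 - G = G ^ 2 + 4 * G + t + 3 := by omega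
  rw [h₁, h₂, Nat.add_sub_cancel]
  nlinarith

theorem eq_of_add_mul_eq_add_mul {s : ℕ} {m n : ℕ × ℕ} (hm : m.1 < s) (hn : n.1 < s)
    (h : m.1 + m.2 * s = n.1 + n.2 * s) : m = n := by
  have hmod := congrArg (· % s) h
  simp only [Nat.add_mul_mod_self_right, Nat.mod_eq_of_lt hm, Nat.mod_eq_of_lt hn] at hmod
  rw [hmod, Nat.add_left_cancel_iff] at h
  exact Prod.ext hmod (Nat.eq_of_mul_eq_mul_right (by omega) h)

/-- Stepanov's method: a combination of the functions `u_n ^ s * u_n'`, `u_n` having a single pole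
of order `n` at infinity, is zero on the curve by linear algebra; raising it to the power `s`
gives a combination of the `u_n * u_n' ^ s` which vanishes at all rational points without being
zero, since these functions have distinct pole orders. -/
theorem mul_powValueCount_le [DecidableEq K] {p n s G : ℕ} [ExpChar K p] (hs : s = p ^ n)
    (hK : Fintype.card K = s ^ 2) (hd : 0 < d) (hdK : d ∣ s ^ 2 - 1)
    (hD : f.natDegree.Coprime d) (hf : f ≠ 0) (hG : (d - 1) * f.natDegree ≤ G)
    (hGs : G ^ 2 + 3 * G + 1 < s) :
    d * powValueCount f d ≤ s ^ 2 + (2 * G + 1) * s := by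
  obtain ⟨a, e, hae⟩ := exists_forall_mul_add_mul_eq hd hD hG
  let ι := ↥(Icc G (s - 1) ×ˢ Icc G (s + 2 * G))
  have hmem (i : ι) : (G ≤ i.1.1 ∧ i.1.1 ≤ s - 1) ∧ G ≤ i.1.2 ∧ i.1.2 ≤ s + 2 * G := by
    simpa only [mem_product, mem_Icc] using i.2
  have hpole (i : ι) : d * (a i.1.1 * s + a i.1.2) + f.natDegree * (e i.1.1 * s + e i.1.2)
      = i.1.1 * s + i.1.2 := by
    conv_rhs => rw [← hae i.1.1 (hmem i).1.1, ← hae i.1.2 (hmem i).2.1]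
    ring
  have hpole_frob (i : ι) : d * (a i.1.1 + a i.1.2 * s) + f.natDegree * (e i.1.1 + e i.1.2 * s)
      = i.1.1 + i.1.2 * s := by
    conv_rhs => rw [← hae i.1.1 (hmem i).1.1, ← hae i.1.2 (hmem i).2.1]
    ring
  obtain ⟨c, hc, hvanish⟩ := exists_curveCoord_eq_zero (K := K) hd hD hf
    (N := (s - 1) * s + (s + 2 * G))
    (fun i : ι => (hpole i).trans_le <| by have := hmem i; gcongr <;> tauto)
    (by rw [Fintype.card_coe]; exact lt_card_Icc_product_Icc hGs)
  obtain ⟨i, hi⟩ := Function.ne_iff.1 hc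
  have hinj : Function.Injective fun i : ι =>
      d * (a i.1.1 + a i.1.2 * s) + f.natDegree * (e i.1.1 + e i.1.2 * s) := fun i j hij => by
    simp only [hpole_frob] at hij
    have hi := hmem i
    have hj := hmem j
    exact Subtype.ext (eq_of_add_mul_eq_add_mul (by omega) (by omega) hij)
  have hne := curveCoord_ne_zero (c := fun i => c i ^ s) hf hinj (pow_ne_zero s hi)
  calc d * powValueCount f d
      ≤ _ := Nat.mul_le_mul_left d <| powValueCount_le_natDegree (hK ▸ hdK)
        (Nat.mod_lt _ hd) hne fun _ _ => sum_eval_curveCoord_pow_card_eq_zero hs hK hd hvanish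
    _ ≤ (s - 1) + (s + 2 * G) * s := mul_natDegree_curveCoord_le hf
        (fun i => (hpole_frob i).trans_le <| by have := hmem i; gcongr <;> tauto) _
    _ ≤ s ^ 2 + (2 * G + 1) * s := by have := Nat.sub_le s 1; nlinarith

theorem mul_unitPowCount [DecidableEq K] (hdK : d ∣ Fintype.card K - 1) :
    d * unitPowCount K d = Fintype.card K - 1 := by
  have hrange : unitPowCount K d = Nat.card (powMonoidHom d : Kˣ →* Kˣ).range := by
    rw [unitPowCount, ← Fintype.card_subtype, ← Nat.card_eq_fintype_card]
    refine Nat.card_congr (Equiv.subtypeEquivRight fun v => ?_)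
    constructor
    · rintro ⟨y, hy⟩
      have hd : d ≠ 0 := (Nat.pos_of_dvd_of_pos hdK (Nat.sub_pos_of_lt Fintype.one_lt_card)).ne'
      have hy0 : y ≠ 0 := by
        rintro rfl
        exact v.ne_zero (by rw [← hy, zero_pow hd])
      exact ⟨Units.mk0 y hy0, Units.ext hy⟩
    · rintro ⟨w, rfl⟩
      exact ⟨w, by simp⟩
  rw [hrange, IsCyclic.card_powMonoidHom_range, Nat.card_eq_fintype_card, Fintype.card_units,
    Nat.gcd_eq_right hdK, Nat.mul_div_cancel' hdK]

theorem sum_filter_mulChar_eq [DecidableEq K] (hd : 0 < d) {ψ : MulChar K ℂ} (hψ : ψ ^ d = 1)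
    (z : Kˣ) :
    ∑ u : Kˣ with ∃ y : K, y ^ d = (u⁻¹ * z : Kˣ), ψ u = unitPowCount K d * ψ z := by
  rw [← nsmul_eq_mul, unitPowCount, ← sum_const]
  refine sum_nbij' (fun u => u⁻¹ * z) (fun v => z * v⁻¹) (fun u hu => ?_) (fun v hv => ?_)
    (fun u _ => by simp) (fun v _ => by simp) fun u hu => ?_
  · simpa using hu
  · simpa using hv
  · obtain ⟨y, hy⟩ := (mem_filter.1 hu).2
    have hy0 : IsUnit y := (isUnit_pow_iff hd.ne').1 (hy ▸ Units.isUnit _)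
    have hψy : ψ (u⁻¹ * z : Kˣ) = 1 := by
      rw [← hy, map_pow, ← MulChar.pow_apply' ψ hd.ne', hψ, MulChar.one_apply hy0]
    rw [← mul_one (ψ u), ← hψy, ← map_mul, ← Units.val_mul, mul_inv_cancel_left]

theorem unitPowCount_mul_sum_mulChar_eval [DecidableEq K] (hd : 0 < d) {ψ : MulChar K ℂ}
    (hψ : ψ ^ d = 1) (f : K[X]) :
    unitPowCount K d * ∑ x, ψ (f.eval x)
      = ∑ u : Kˣ, ψ u * powValueCount (C (↑u⁻¹ : K) * f) d := by
  simp only [powValueCount, eval_mul, eval_C, natCast_card_filter, mul_sum]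
  rw [sum_comm]
  refine sum_congr rfl fun x _ => ?_
  rcases eq_or_ne (f.eval x) 0 with hx | hx
  · simp [hx, MulChar.map_zero]
  · have hcount : _ = unitPowCount K d * ψ (f.eval x) :=
      sum_filter_mulChar_eq hd hψ (Units.mk0 _ hx)
    rw [← hcount, sum_filter]
    exact sum_congr rfl fun u _ => by simp [hx]

theorem unitPowCount_mul_card_sub_natDegree_le [DecidableEq K] (hd : 0 < d) (hf : f ≠ 0) :
    (unitPowCount K d : ℝ) * (Fintype.card K - f.natDegree)
      ≤ ∑ u : Kˣ, (powValueCount (C (↑u⁻¹ : K) * f) d : ℝ) := by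
  have hroots : Fintype.card K ≤ #{x | f.eval x ≠ 0} + f.natDegree := by
    rw [← card_univ, ← card_filter_add_card_filter_not (fun x => f.eval x ≠ 0)]
    gcongr
    exact card_le_degree_of_subset_roots fun x hx => by simpa [hf] using hx
  have hones (z : K) : (1 : MulChar K ℂ) z = if z ≠ 0 then 1 else 0 := by
    split_ifs with hz
    · exact MulChar.one_apply (isUnit_iff_ne_zero.2 hz)
    · rw [not_not.1 hz, MulChar.map_zero]
  have htwist := unitPowCount_mul_sum_mulChar_eval hd (one_pow (M := MulChar K ℂ) d) f
  simp only [hones, ← natCast_card_filter, Units.ne_zero, ne_eq, not_false_eq_true, if_true,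
    one_mul] at htwist
  calc (unitPowCount K d : ℝ) * (Fintype.card K - f.natDegree)
      ≤ unitPowCount K d * #{x | f.eval x ≠ 0} := by
        gcongr
        rw [sub_le_iff_le_add]
        exact_mod_cast hroots
    _ = _ := by exact_mod_cast htwist

theorem sum_units_mulChar_eq_zero [DecidableEq K] {ψ : MulChar K ℂ} (hψ : ψ ≠ 1) :
    ∑ u : Kˣ, ψ u = 0 :=
  sum_hom_units_eq_zero ((ψ : K →* ℂ).comp (Units.coeHom K)) fun h =>
    hψ <| MulChar.ext fun u => by simpa using DFunLike.congr_fun h u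

/-- Averaging over the classes `u` modulo `d`-th powers turns the upper bounds for the number of
points on the twists `u * y ^ d = f(x)` into bounds in both directions. -/
theorem norm_sum_mulChar_eval_le {p n s G : ℕ} [ExpChar K p] (hs : s = p ^ n)
    (hK : Fintype.card K = s ^ 2) (hd : 0 < d) (hdK : d ∣ s ^ 2 - 1)
    (hD : f.natDegree.Coprime d) (hf : f ≠ 0) (hG : (d - 1) * f.natDegree ≤ G)
    (hGs : G ^ 2 + 3 * G + 1 < s) {ψ : MulChar K ℂ} (hψ : ψ ^ d = 1) (hψ1 : ψ ≠ 1) :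
    ‖∑ x : K, ψ (f.eval x)‖ ≤ (2 * G + 1) * s + f.natDegree := by
  classical
  set pts : Kˣ → ℕ := fun u => powValueCount (C (↑u⁻¹ : K) * f) d
  set B : ℝ := s ^ 2 + (2 * G + 1) * s with hB
  have hE : (d : ℝ) * unitPowCount K d = Fintype.card Kˣ := by
    exact_mod_cast Fintype.card_units (α := K) ▸ mul_unitPowCount (hK ▸ hdK)
  have hpts (u : Kˣ) : d * pts u ≤ B := by
    have hdeg : (C (↑u⁻¹ : K) * f).natDegree = f.natDegree := natDegree_C_mul u⁻¹.ne_zero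
    rw [hB]
    exact_mod_cast mul_powValueCount_le hs hK hd hdK (hdeg ▸ hD)
      (mul_ne_zero (C_ne_zero.2 u⁻¹.ne_zero) hf) (hdeg ▸ hG) hGs
  have hsum : (Fintype.card Kˣ : ℂ) * ∑ x, ψ (f.eval x) = ∑ u : Kˣ, ψ u * (d * pts u - B) := by
    simp only [mul_sub, sum_sub_distrib, ← sum_mul, sum_units_mulChar_eq_zero hψ1, zero_mul,
      sub_zero, mul_left_comm (ψ _) (d : ℂ), ← mul_sum]
    rw [← unitPowCount_mul_sum_mulChar_eval hd hψ f, ← mul_assoc]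
    congr 1
    exact_mod_cast hE.symm
  have hnorm (u : Kˣ) : ‖ψ u‖ = 1 :=
    Complex.norm_eq_one_of_pow_eq_one (n := d)
      (by rw [← MulChar.pow_apply_coe, hψ, MulChar.one_apply_coe]) hd.ne'
  have hcard : (0 : ℝ) < Fintype.card Kˣ := by exact_mod_cast Fintype.card_pos
  refine le_of_mul_le_mul_left ?_ hcard
  calc Fintype.card Kˣ * ‖∑ x : K, ψ (f.eval x)‖
      = ‖∑ u : Kˣ, ψ u * (d * pts u - B)‖ := by rw [← hsum, norm_mul, Complex.norm_natCast]
    _ ≤ ∑ u : Kˣ, (B - d * pts u) := norm_sum_le_of_le _ fun u _ => by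
        rw [norm_mul, hnorm, one_mul, ← abs_of_nonneg (sub_nonneg.2 (hpts u)), abs_sub_comm,
          ← Real.norm_eq_abs, ← Complex.norm_real]
        push_cast
        rfl
    _ = Fintype.card Kˣ * B - d * ∑ u, (pts u : ℝ) := by
        rw [sum_sub_distrib, sum_const, card_univ, nsmul_eq_mul, mul_sum]
    _ ≤ Fintype.card Kˣ * B - d * (unitPowCount K d * (Fintype.card K - f.natDegree)) := by
        gcongr
        exact unitPowCount_mul_card_sub_natDegree_le hd hf
    _ = Fintype.card Kˣ * ((2 * G + 1) * s + f.natDegree) := by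
        rw [← mul_assoc, hE, hK]; push_cast; ring

end Stepanov

section LFunction

open Polynomial UniqueFactorizationMonoid

theorem sum_Icc_sum_divisors {A : Type*} [AddCommMonoid A] (f : ℕ → ℕ → A) (n : ℕ) :
    ∑ k ∈ Icc 1 n, ∑ t ∈ k.divisors, f t (k / t) = ∑ t ∈ Icc 1 n, ∑ j ∈ Icc 1 (n / t), f t j := by
  rw [sum_sigma', sum_sigma']
  refine sum_nbij' (fun x => ⟨x.2, x.1 / x.2⟩) (fun x => ⟨x.1 * x.2, x.1⟩) ?_ ?_ ?_ ?_
    fun _ _ => rfl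
  · rintro ⟨k, t⟩ h
    simp only [mem_sigma, mem_Icc, Nat.mem_divisors] at h ⊢
    obtain ⟨⟨hk, hkn⟩, ⟨j, rfl⟩, -⟩ := h
    have ht : 0 < t := Nat.pos_of_mul_pos_right hk
    have hj : 0 < j := Nat.pos_of_mul_pos_left hk
    rw [Nat.mul_div_cancel_left _ ht, Nat.le_div_iff_mul_le ht, mul_comm j]
    exact ⟨⟨ht, (Nat.le_mul_of_pos_right t hj).trans hkn⟩, hj, hkn⟩
  · rintro ⟨t, j⟩ h
    simp only [mem_sigma, mem_Icc, Nat.mem_divisors] at h ⊢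
    obtain ⟨⟨ht, -⟩, hj, hjn⟩ := h
    rw [Nat.le_div_iff_mul_le ht, mul_comm] at hjn
    exact ⟨⟨Nat.mul_pos ht hj, hjn⟩, dvd_mul_right _ _, (Nat.mul_pos ht hj).ne'⟩
  · rintro ⟨k, t⟩ h
    simp only [mem_sigma, Nat.mem_divisors] at h
    simp only [Nat.mul_div_cancel' h.2.1]
  · rintro ⟨t, j⟩ h
    simp only [mem_sigma, mem_Icc] at h
    simp only [Nat.mul_div_cancel_left _ h.1.1]

variable {F : Type*} [Field F]

theorem finite_setOf_monic_natDegree_eq [Finite F] (n : ℕ) :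
    {g : F[X] | g.Monic ∧ g.natDegree = n}.Finite := by
  have : Finite (degreeLT F n) := Finite.of_equiv _ (degreeLTEquiv F n).symm.toEquiv
  exact Set.finite_coe_iff.1 (Finite.of_equiv _ (monicEquivDegreeLT n).symm)

section Factors

variable [DecidableEq F] {g P : F[X]}

theorem monic_and_irreducible_of_mem_normalizedFactors (hP : P ∈ normalizedFactors g) :
    P.Monic ∧ Irreducible P := by
  have hirr := irreducible_of_normalized_factor P hP
  exact ⟨normalize_normalized_factor P hP ▸ monic_normalize hirr.ne_zero, hirr⟩

theorem pow_dvd_iff_le_count_normalizedFactors (hg : g ≠ 0) (hP : P.Monic) (hirr : Irreducible P)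
    {j : ℕ} : P ^ j ∣ g ↔ j ≤ (normalizedFactors g).count P := by
  rw [pow_dvd_iff_le_emultiplicity, emultiplicity_eq_count_normalizedFactors hirr hg,
    hP.normalize_eq_self]
  exact Nat.cast_le

theorem sum_count_normalizedFactors_mul_natDegree (hg : g.Monic) :
    ∑ P ∈ (normalizedFactors g).toFinset, (normalizedFactors g).count P * P.natDegree
      = g.natDegree := by
  have hprod : (normalizedFactors g).prod = g := by
    rw [prod_normalizedFactors_eq hg.ne_zero, hg.normalize_eq_self]
  conv_rhs => rw [← hprod]
  rw [natDegree_multiset_prod_of_monic _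
    fun P hP => (monic_and_irreducible_of_mem_normalizedFactors hP).1, sum_multiset_map_count]
  simp only [smul_eq_mul]

end Factors

variable (F) [Finite F]

/-- The finite set of monic polynomials of degree `n`. -/
noncomputable def monicsOfDegree (n : ℕ) : Finset F[X] :=
  (finite_setOf_monic_natDegree_eq n).toFinset

open Classical in
/-- The finite set of monic irreducible polynomials of degree `n`. -/
noncomputable def irreduciblesOfDegree (n : ℕ) : Finset F[X] :=
  {g ∈ monicsOfDegree F n | Irreducible g}

variable {F}

theorem mem_monicsOfDegree {n : ℕ} {g : F[X]} :
    g ∈ monicsOfDegree F n ↔ g.Monic ∧ g.natDegree = n := by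
  simp [monicsOfDegree]

theorem mem_irreduciblesOfDegree {n : ℕ} {g : F[X]} :
    g ∈ irreduciblesOfDegree F n ↔ g.Monic ∧ g.natDegree = n ∧ Irreducible g := by
  simp [irreduciblesOfDegree, mem_monicsOfDegree, and_assoc]

theorem monicsOfDegree_zero : monicsOfDegree F 0 = {1} := by
  ext g
  rw [mem_monicsOfDegree, mem_singleton]
  refine ⟨fun h => h.1.natDegree_eq_zero.1 h.2, ?_⟩
  rintro rfl
  exact ⟨monic_one, natDegree_one⟩

open Classical in
theorem sum_irreduciblesOfDegree_count_mul (g : F[X]) (hg : g ≠ 0) :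
    ∑ t ∈ Icc 1 g.natDegree, ∑ P ∈ irreduciblesOfDegree F t, (normalizedFactors g).count P * t
      = ∑ P ∈ (normalizedFactors g).toFinset, (normalizedFactors g).count P * P.natDegree := by
  rw [← sum_fiberwise_of_maps_to (t := Icc 1 g.natDegree) (g := natDegree) fun P hP => ?_]
  · refine sum_congr rfl fun t _ => (sum_subset_zero_on_sdiff ?_ ?_ ?_).symm
    · intro P hP
      rw [mem_filter, Multiset.mem_toFinset] at hP
      have := monic_and_irreducible_of_mem_normalizedFactors hP.1
      exact mem_irreduciblesOfDegree.2 ⟨this.1, hP.2, this.2⟩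
    · intro P hP
      rw [mem_sdiff, mem_filter, Multiset.mem_toFinset, mem_irreduciblesOfDegree] at hP
      rw [Multiset.count_eq_zero_of_notMem fun h => hP.2 ⟨h, hP.1.2.1⟩, zero_mul]
    · intro P hP
      rw [(mem_filter.1 hP).2]
  · rw [Multiset.mem_toFinset] at hP
    exact mem_Icc.2 ⟨(monic_and_irreducible_of_mem_normalizedFactors hP).2.natDegree_pos,
      natDegree_le_of_dvd (dvd_of_mem_normalizedFactors hP) hg⟩

open Classical in
/-- The analogue of `∑_{m ∣ n} Λ(m) = log n` for the von Mangoldt function. -/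
theorem sum_divisors_sum_irreduciblesOfDegree_eq_natDegree {g : F[X]} (hg : g.Monic) :
    ∑ k ∈ Icc 1 g.natDegree, ∑ t ∈ k.divisors, ∑ P ∈ irreduciblesOfDegree F t,
      (if P ^ (k / t) ∣ g then t else 0) = g.natDegree := by
  rw [sum_Icc_sum_divisors
      (fun t j => ∑ P ∈ irreduciblesOfDegree F t, if P ^ j ∣ g then t else 0)]
  refine Eq.trans (sum_congr rfl fun t ht => ?_) ((sum_irreduciblesOfDegree_count_mul g
    hg.ne_zero).trans (sum_count_normalizedFactors_mul_natDegree hg))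
  rw [sum_comm]
  refine sum_congr rfl fun P hP => ?_
  obtain ⟨hPmonic, hPdeg, hPirr⟩ := mem_irreduciblesOfDegree.1 hP
  have hfilter : {j ∈ Icc 1 (g.natDegree / t) | P ^ j ∣ g}
      = Icc 1 ((normalizedFactors g).count P) := by
    ext j
    rw [mem_filter, mem_Icc, mem_Icc,
      ← pow_dvd_iff_le_count_normalizedFactors hg.ne_zero hPmonic hPirr]
    refine ⟨fun h => ⟨h.1.1, h.2⟩, fun h => ⟨⟨h.1, ?_⟩, h.2⟩⟩
    rw [Nat.le_div_iff_mul_le (mem_Icc.1 ht).1, ← hPdeg, ← natDegree_pow]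
    exact natDegree_le_of_dvd h.2 hg.ne_zero
  rw [← sum_filter, sum_const, hfilter, Nat.card_Icc, smul_eq_mul, Nat.add_sub_cancel]

variable {R : Type*} [CommSemiring R] (Λ : F[X] →* R)

/-- The `n`-th coefficient of the `L`-function `∑ Λ(g) T ^ deg g`, `g` monic. -/
noncomputable def lCoeff (n : ℕ) : R := ∑ g ∈ monicsOfDegree F n, Λ g

/-- The `k`-th coefficient of the logarithmic derivative `T L'(T) / L(T)` of the `L`-function
`∑ Λ(g) T ^ deg g`, `g` monic. -/
noncomputable def lPowerSum (k : ℕ) : R :=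
  ∑ t ∈ k.divisors, ∑ P ∈ irreduciblesOfDegree F t, (t : R) * Λ P ^ (k / t)

theorem lCoeff_zero : lCoeff Λ 0 = 1 := by
  rw [lCoeff, monicsOfDegree_zero, sum_singleton, map_one]

open Classical in
theorem sum_monicsOfDegree_filter_dvd {n : ℕ} {Q : F[X]} (hQ : Q.Monic) (hn : Q.natDegree ≤ n) :
    ∑ g ∈ monicsOfDegree F n with Q ∣ g, Λ g = Λ Q * lCoeff Λ (n - Q.natDegree) := by
  rw [lCoeff, mul_sum]
  symm
  refine sum_bij (fun h _ => Q * h) (fun h hh => ?_) (fun h _ h' _ => mul_left_cancel₀ hQ.ne_zero)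
    (fun g hg => ?_) fun h _ => (map_mul Λ Q h).symm
  · obtain ⟨hmonic, hdeg⟩ := mem_monicsOfDegree.1 hh
    refine mem_filter.2 ⟨mem_monicsOfDegree.2 ⟨hQ.mul hmonic, ?_⟩, dvd_mul_right _ _⟩
    rw [hQ.natDegree_mul hmonic, hdeg]
    omega
  · obtain ⟨hg, h, rfl⟩ := mem_filter.1 hg
    obtain ⟨hmonic, hdeg⟩ := mem_monicsOfDegree.1 hg
    have hh := hQ.of_mul_monic_left hmonic
    rw [hQ.natDegree_mul hh] at hdeg
    exact ⟨h, mem_monicsOfDegree.2 ⟨hh, by omega⟩, rfl⟩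

theorem natCast_mul_lCoeff (n : ℕ) :
    (n : R) * lCoeff Λ n = ∑ k ∈ Icc 1 n, lPowerSum Λ k * lCoeff Λ (n - k) := by
  classical
  have hexpand : (n : R) * lCoeff Λ n = ∑ g ∈ monicsOfDegree F n, ∑ k ∈ Icc 1 n,
      ∑ t ∈ k.divisors, ∑ P ∈ irreduciblesOfDegree F t,
        (t : R) * if P ^ (k / t) ∣ g then Λ g else 0 := by
    rw [lCoeff, mul_sum]
    refine sum_congr rfl fun g hg => ?_
    obtain ⟨hmonic, rfl⟩ := mem_monicsOfDegree.1 hg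
    conv_lhs => rw [← sum_divisors_sum_irreduciblesOfDegree_eq_natDegree hmonic]
    push_cast
    simp only [sum_mul, ite_mul, zero_mul, mul_ite, mul_zero]
  rw [hexpand, sum_comm]
  refine sum_congr rfl fun k hk => ?_
  rw [sum_comm, lPowerSum, sum_mul]
  refine sum_congr rfl fun t ht => ?_
  rw [sum_comm, sum_mul]
  refine sum_congr rfl fun P hP => ?_
  obtain ⟨hPmonic, hPdeg, -⟩ := mem_irreduciblesOfDegree.1 hP
  have hdeg : (P ^ (k / t)).natDegree = k := by
    rw [natDegree_pow, hPdeg, Nat.div_mul_cancel (Nat.dvd_of_mem_divisors ht)]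
  rw [← mul_sum, ← sum_filter, sum_monicsOfDegree_filter_dvd Λ (hPmonic.pow _)
    (hdeg.trans_le (mem_Icc.1 hk).2), hdeg, map_pow, mul_assoc]

end LFunction

section EvalChar

open Polynomial

variable {F ι : Type*} [Field F] [Fintype ι] (χ : MulChar F ℂ) (b : ι → F) (e : ι → ℕ)

/-- The multiplicative function `g ↦ ∏ i, χ (g (b i)) ^ e i` on polynomials. -/
noncomputable def evalChar : F[X] →* ℂ :=
  ∏ i, ((χ : F →* ℂ).comp (evalRingHom (b i) : F[X] →* F)) ^ e i

theorem evalChar_apply (g : F[X]) : evalChar χ b e g = ∏ i, χ (g.eval (b i)) ^ e i := by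
  simp [evalChar, MonoidHom.finsetProd_apply]

theorem C_mul_add_mem_monicsOfDegree [Finite F] {n : ℕ} (γ : F) {g h : F[X]}
    (hg : g ∈ monicsOfDegree F n) (hh : h ∈ monicsOfDegree F n) :
    C γ * g + C (1 - γ) * h ∈ monicsOfDegree F n := by
  rw [mem_monicsOfDegree] at hg hh ⊢
  have hle : (C γ * g + C (1 - γ) * h).natDegree ≤ n :=
    natDegree_add_le_of_degree_le ((natDegree_C_mul_le _ _).trans hg.2.le)
      ((natDegree_C_mul_le _ _).trans hh.2.le)
  have hcoeff : (C γ * g + C (1 - γ) * h).coeff n = 1 := by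
    have hgn : g.coeff n = 1 := hg.2 ▸ hg.1
    have hhn : h.coeff n = 1 := hh.2 ▸ hh.1
    rw [coeff_add, coeff_C_mul, coeff_C_mul, hgn, hhn]
    ring
  exact ⟨monic_of_natDegree_le_of_coeff_eq_one n hle hcoeff,
    natDegree_eq_of_le_of_coeff_ne_zero hle (by rw [hcoeff]; exact one_ne_zero)⟩

theorem exists_mem_monicsOfDegree_eval_eq_zero [Finite F] {n : ℕ} (hn : Fintype.card ι ≤ n) :
    ∃ W ∈ monicsOfDegree F n, ∀ i, W.eval (b i) = 0 := by
  have hprod : (∏ i, (X - C (b i))).Monic := monic_prod_of_monic _ _ fun i _ => monic_X_sub_C _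
  refine ⟨X ^ (n - Fintype.card ι) * ∏ i, (X - C (b i)),
    mem_monicsOfDegree.2 ⟨(monic_X_pow _).mul hprod, ?_⟩, fun i => ?_⟩
  · rw [(monic_X_pow _).natDegree_mul hprod, natDegree_X_pow,
      natDegree_prod_of_monic _ _ fun i _ => monic_X_sub_C _]
    simpa using Nat.sub_add_cancel hn
  · rw [eval_mul, eval_prod, prod_eq_zero (mem_univ i) (by simp), mul_zero]

/-- The dilations of the affine space of monic polynomials centred at a polynomial vanishing at
all `b i` multiply `evalChar χ b e` by the constants `χ γ ^ ∑ i, e i`. -/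
theorem lCoeff_evalChar_eq_zero [Finite F] {γ : Fˣ} (hγ : χ γ ^ ∑ i, e i ≠ 1) {n : ℕ}
    (hn : Fintype.card ι ≤ n) : lCoeff (evalChar χ b e) n = 0 := by
  obtain ⟨W, hW, hWb⟩ := exists_mem_monicsOfDegree_eval_eq_zero b hn
  have hinv (u : Fˣ) (g : F[X]) :
      C (↑u⁻¹ : F) * (C (u : F) * g + C (1 - (u : F)) * W) + C (1 - (↑u⁻¹ : F)) * W = g := by
    have : C (↑u⁻¹ : F) * C (u : F) = 1 := by rw [← C_mul, Units.inv_mul, C_1]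
    simp only [C_sub, C_1]
    linear_combination (g - W) * this
  have hscale : χ γ ^ (∑ i, e i) * lCoeff (evalChar χ b e) n = lCoeff (evalChar χ b e) n := by
    rw [lCoeff, mul_sum]
    refine sum_nbij' (fun g => C (γ : F) * g + C (1 - (γ : F)) * W)
      (fun g => C (↑γ⁻¹ : F) * g + C (1 - (↑γ⁻¹ : F)) * W)
      (fun g hg => C_mul_add_mem_monicsOfDegree _ hg hW)
      (fun g hg => C_mul_add_mem_monicsOfDegree _ hg hW)
      (fun g _ => hinv γ g) (fun g _ => by simpa using hinv γ⁻¹ g) fun g _ => ?_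
    simp only [evalChar_apply, eval_add, eval_mul, eval_C, hWb, mul_zero, add_zero, map_mul,
      mul_pow, prod_mul_distrib, prod_pow_eq_pow_sum]
  exact (mul_left_eq_self₀.1 hscale).resolve_left hγ

end EvalChar

section PowerSums

open Polynomial

theorem exists_forall_eq_neg_one_pow_mul_esymm {K : Type*} [Field K] [IsAlgClosed K] {m : ℕ}
    {c : ℕ → K} (h0 : c 0 = 1) (hm : ∀ n, m < n → c n = 0) :
    ∃ ω : Fin m → K, ∀ n, c n = (-1) ^ n * (univ.val.map ω).esymm n := by
  set P : K[X] := ∑ n ∈ range (m + 1), monomial n (c (m - n)) with hP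
  have hcoeff {n : ℕ} (hn : n ≤ m) : P.coeff n = c (m - n) := by
    simp [hP, coeff_monomial, Nat.lt_succ_of_le hn]
  have hle : P.natDegree ≤ m := natDegree_sum_le_of_forall_le _ _ fun n hn =>
    (natDegree_monomial_le _).trans (Nat.lt_succ_iff.1 (mem_range.1 hn))
  have hlead : P.coeff m = 1 := by rw [hcoeff le_rfl, Nat.sub_self, h0]
  have hmonic := monic_of_natDegree_le_of_coeff_eq_one m hle hlead
  have hdeg : P.natDegree = m :=
    natDegree_eq_of_le_of_coeff_ne_zero hle (hlead.trans_ne one_ne_zero)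
  have hcard : P.roots.card = P.natDegree := splits_iff_card_roots.1 (IsAlgClosed.splits P)
  obtain ⟨ω, hω⟩ : ∃ ω : Fin m → K, univ.val.map ω = P.roots := by
    obtain ⟨l, hl⟩ := Quot.exists_rep P.roots
    obtain rfl : l.length = m := by rw [← hdeg, ← hcard, ← hl]; rfl
    exact ⟨l.get, by rw [← hl, Fin.univ_val_map, List.ofFn_get]; rfl⟩
  refine ⟨ω, fun n => ?_⟩
  rcases le_or_gt n m with hn | hn
  · have h := coeff_eq_esymm_roots_of_card hcard (k := m - n) (by omega)
    rwa [hcoeff (Nat.sub_le m n), hmonic.leadingCoeff, hdeg, Nat.sub_sub_self hn, one_mul,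
      ← hω] at h
  · rw [hm n hn, Multiset.esymm, Multiset.powersetCard_eq_empty _ (by simpa using hn)]
    simp

theorem natCast_mul_neg_one_pow_mul_esymm {R : Type*} [CommRing R] {m : ℕ} (ω : Fin m → R) (n : ℕ) :
    n * ((-1) ^ n * (univ.val.map ω).esymm n)
      = ∑ k ∈ Icc 1 n, -(∑ j, ω j ^ k) * ((-1) ^ (n - k) * (univ.val.map ω).esymm (n - k)) := by
  have newton := congrArg (MvPolynomial.aeval ω) (MvPolynomial.mul_esymm_eq_sum (Fin m) R n)
  simp only [map_mul, map_natCast, map_pow, map_neg, map_one, map_sum,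
    MvPolynomial.aeval_esymm_eq_multiset_esymm, MvPolynomial.psum, MvPolynomial.aeval_X] at newton
  rw [mul_left_comm, newton, ← mul_assoc, ← pow_add, Odd.neg_one_pow ⟨n, by ring⟩, neg_one_mul,
    ← sum_neg_distrib]
  refine sum_bij' (fun a _ => a.2) (fun k _ => (n - k, k)) ?_ ?_ ?_ (fun _ _ => rfl) ?_
  · rintro ⟨a, b⟩ h
    simp only [mem_filter, HasAntidiagonal.mem_antidiagonal, mem_Icc] at h ⊢
    omega
  · intro k hk
    simp only [mem_filter, HasAntidiagonal.mem_antidiagonal, mem_Icc] at hk ⊢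
    omega
  · rintro ⟨a, b⟩ h
    simp only [mem_filter, HasAntidiagonal.mem_antidiagonal] at h
    exact Prod.ext (by simp only; omega) rfl
  · rintro ⟨a, b⟩ h
    simp only [mem_filter, HasAntidiagonal.mem_antidiagonal] at h
    obtain rfl : a = n - b := by omega
    ring

theorem eq_of_forall_sum_mul_eq {R : Type*} [Ring R] {c S T : ℕ → R} (h0 : c 0 = 1)
    (h : ∀ n, ∑ k ∈ Icc 1 n, S k * c (n - k) = ∑ k ∈ Icc 1 n, T k * c (n - k)) {k : ℕ}
    (hk : 1 ≤ k) : S k = T k := by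
  induction k using Nat.strong_induction_on with
  | _ k ih =>
    obtain ⟨k, rfl⟩ := Nat.exists_eq_add_of_le' hk
    have hsum := h (k + 1)
    rw [sum_Icc_succ_top hk, sum_Icc_succ_top hk, sum_congr rfl fun x hx => by
      rw [ih x (by have := mem_Icc.1 hx; omega) (mem_Icc.1 hx).1]] at hsum
    simpa [h0] using hsum

theorem exists_forall_eq_neg_sum_pow {K : Type*} [Field K] [IsAlgClosed K] {m : ℕ} {c S : ℕ → K}
    (h0 : c 0 = 1) (hm : ∀ n, m < n → c n = 0)
    (hS : ∀ n : ℕ, n * c n = ∑ k ∈ Icc 1 n, S k * c (n - k)) :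
    ∃ ω : Fin m → K, ∀ k, 1 ≤ k → S k = -∑ j, ω j ^ k := by
  obtain ⟨ω, hω⟩ := exists_forall_eq_neg_one_pow_mul_esymm h0 hm
  refine ⟨ω, fun k => eq_of_forall_sum_mul_eq (T := fun k => -∑ j, ω j ^ k) h0 fun n => ?_⟩
  rw [← hS n]
  simp only [hω]
  exact natCast_mul_neg_one_pow_mul_esymm ω n

variable {ι : Type*}

open Filter Topology in
theorem frequently_forall_norm_pow_div_two_le_re [Finite ι] (z : ι → ℂ) :
    ∃ᶠ n in atTop, ∀ i, ‖z i‖ ^ n / 2 ≤ (z i ^ n).re := by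
  have hpolar (i : ι) : ∃ w : Circle, z i = ‖z i‖ * (w : ℂ) :=
    ⟨Circle.exp (z i).arg, by rw [Circle.coe_exp, Complex.norm_mul_exp_arg_mul_I]⟩
  choose w hw using hpolar
  have hnhds : {v : ι → Circle | ∀ i, 1 / 2 < (v i : ℂ).re} ∈ 𝓝 1 := by
    refine eventually_all.2 fun i => ?_
    exact (isOpen_lt continuous_const (Complex.continuous_re.comp
      (continuous_subtype_val.comp (continuous_apply i)))).mem_nhds (by norm_num [Function.comp])
  refine ((mapClusterPt_one_atTop_pow w).frequently hnhds).mono fun n hn i => ?_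
  have hre : (z i ^ n).re = ‖z i‖ ^ n * ((w i : ℂ) ^ n).re := by
    conv_lhs => rw [hw i, mul_pow, ← Complex.ofReal_pow, Complex.re_ofReal_mul]
  rw [hre, div_eq_mul_one_div]
  exact mul_le_mul_of_nonneg_left (by simpa using (hn i).le) (by positivity)

open Filter in
theorem norm_le_of_eventually_norm_sum_pow_le [Fintype ι] {z : ι → ℂ} {q C : ℝ} (hq : 0 < q)
    (h : ∀ᶠ n in atTop, ‖∑ i, z i ^ n‖ ≤ C * q ^ n) (j : ι) : ‖z j‖ ≤ q := by
  by_contra! hlt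
  have hlim : Tendsto (fun n : ℕ => (‖z j‖ / q) ^ n) atTop atTop :=
    tendsto_pow_atTop_atTop_of_one_lt ((one_lt_div hq).2 hlt)
  obtain ⟨n, hre, hgt, hle⟩ := ((frequently_forall_norm_pow_div_two_le_re z).and_eventually
    ((hlim.eventually_gt_atTop (2 * C)).and h)).exists
  rw [div_pow, lt_div_iff₀ (by positivity)] at hgt
  have hsum : ‖z j‖ ^ n / 2 ≤ (∑ i, z i ^ n).re := by
    rw [Complex.re_sum]
    exact (hre j).trans (single_le_sum (f := fun i => (z i ^ n).re)
      (fun i _ => (hre i).trans' (by positivity)) (mem_univ j))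
  linarith [hsum.trans ((Complex.re_le_norm _).trans hle)]

end PowerSums

section Extension

open Polynomial

variable {F L : Type*} [Field F] [Field L] [Algebra F L]

theorem norm_algebraMap_sub [FiniteDimensional F L] (b : F) (α : L) :
    Algebra.norm F (algebraMap F L b - α)
      = (minpoly F α).eval b ^ (Module.finrank F L / (minpoly F α).natDegree) := by
  have hint : IsIntegral F α := IsIntegral.of_finite F α
  set E := IntermediateField.adjoin F {α}
  set pb := IntermediateField.adjoin.powerBasis hint
  have hgen : pb.gen = IntermediateField.AdjoinSimple.gen F α := rfl
  have hlift : algebraMap F L b - α = algebraMap E L (algebraMap F E b - pb.gen) := by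
    rw [map_sub, hgen, IntermediateField.AdjoinSimple.algebraMap_gen,
      ← IsScalarTower.algebraMap_apply]
  have hnorm : Algebra.norm F (algebraMap F E b - pb.gen) = (minpoly F α).eval b := by
    have hscalar : Algebra.leftMulMatrix pb.basis (algebraMap F E b) = Matrix.scalar _ b :=
      (Algebra.leftMulMatrix pb.basis).commutes b
    rw [Algebra.norm_eq_matrix_det pb.basis, map_sub, hscalar, ← Matrix.eval_charpoly,
      charpoly_leftMulMatrix, hgen, IntermediateField.minpoly_gen]
  have hrank : Module.finrank E L = Module.finrank F L / (minpoly F α).natDegree := by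
    rw [← Module.finrank_mul_finrank F E L, IntermediateField.adjoin.finrank hint,
      Nat.mul_div_cancel_left _ (minpoly.natDegree_pos hint)]
  rw [hlift, ← Algebra.norm_norm (R := F) (S := E), Algebra.norm_algebraMap, map_pow, hnorm, hrank]

variable [Finite F] [Fintype L]

open Classical in
theorem card_filter_minpoly_eq {P : F[X]} (hP : P.Monic) (hirr : Irreducible P)
    (hdvd : P.natDegree ∣ Module.finrank F L) : #{α : L | minpoly F α = P} = P.natDegree := by
  have := Fintype.ofFinite F
  have hcard : Nat.card F ^ Module.finrank F L = Fintype.card L := by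
    rw [← Module.natCard_eq_pow_finrank, Nat.card_eq_fintype_card]
  have hsplit : (P.map (algebraMap F L)).Splits := by
    refine Splits.of_dvd (FiniteField.isSplittingField_sub L F).splits ?_ (Polynomial.map_dvd _ ?_)
    · exact (Polynomial.map_ne_zero_iff (algebraMap F L).injective).2
        (FiniteField.X_pow_card_sub_X_ne_zero F Fintype.one_lt_card)
    · rw [← hcard]
      exact (hirr.natDegree_dvd_iff_dvd_X_pow_card_pow_sub_X).1 hdvd
  rw [← card_rootSet_eq_natDegree (PerfectField.separable_of_irreducible hirr) hsplit,
    ← Set.toFinset_card]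
  congr 1
  ext α
  simp only [mem_filter, mem_univ, true_and, Set.mem_toFinset, mem_rootSet]
  constructor
  · rintro rfl
    exact ⟨hP.ne_zero, minpoly.aeval _ _⟩
  · exact fun h => (minpoly.eq_of_irreducible_of_monic hirr h.2 hP).symm

variable (L)

theorem lPowerSum_finrank {R : Type*} [CommSemiring R] (Λ : F[X] →* R) :
    lPowerSum Λ (Module.finrank F L)
      = ∑ α : L, Λ (minpoly F α) ^ (Module.finrank F L / (minpoly F α).natDegree) := by
  classical
  have hint (α : L) : IsIntegral F α := IsIntegral.of_finite F α
  rw [← sum_fiberwise_of_maps_to (t := (Module.finrank F L).divisors)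
    (g := fun α : L => (minpoly F α).natDegree)
    fun α _ => Nat.mem_divisors.2 ⟨minpoly.degree_dvd (hint α), Module.finrank_pos.ne'⟩]
  refine sum_congr rfl fun t ht => ?_
  rw [← sum_fiberwise_of_maps_to (t := irreduciblesOfDegree F t) (g := minpoly F) fun α hα =>
    mem_irreduciblesOfDegree.2
      ⟨minpoly.monic (hint α), (mem_filter.1 hα).2, minpoly.irreducible (hint α)⟩]
  refine sum_congr rfl fun P hP => ?_
  obtain ⟨hmonic, rfl, hirr⟩ := mem_irreduciblesOfDegree.1 hP
  rw [filter_filter, filter_congr (q := fun α : L => minpoly F α = P)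
    fun α _ => ⟨fun h => h.2, fun h => ⟨h ▸ rfl, h⟩⟩, sum_congr rfl
      (g := fun _ => Λ P ^ (Module.finrank F L / P.natDegree))
      fun α hα => by rw [(mem_filter.1 hα).2], sum_const,
    card_filter_minpoly_eq hmonic hirr (Nat.dvd_of_mem_divisors ht), nsmul_eq_mul]

variable {ι : Type*} [Fintype ι]

theorem lPowerSum_evalChar_finrank (χ : MulChar F ℂ) (b : ι → F) (e : ι → ℕ) :
    lPowerSum (evalChar χ b e) (Module.finrank F L)
      = ∑ α : L, ∏ i, χ (Algebra.norm F (algebraMap F L (b i) - α)) ^ e i := by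
  rw [lPowerSum_finrank]
  refine sum_congr rfl fun α _ => ?_
  simp only [norm_algebraMap_sub, evalChar_apply, ← prod_pow, map_pow, ← pow_mul, mul_comm]

end Extension

section NormPullback

variable {F : Type*} (L : Type*) [Field F] [Field L] [Algebra F L] [FiniteDimensional F L]

/-- The multiplicative character `χ ∘ N` of a finite extension `L` of `F`, with `N : L → F` the
norm. -/
noncomputable def normPullback (χ : MulChar F ℂ) : MulChar L ℂ where
  toMonoidHom := χ.toMonoidHom.comp (Algebra.norm F)
  map_nonunit' a ha := by
    rw [isUnit_iff_ne_zero, not_not] at ha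
    change χ (Algebra.norm F a) = 0
    rw [ha, Algebra.norm_zero, MulChar.map_zero]

variable {L} in
theorem normPullback_apply (χ : MulChar F ℂ) (x : L) :
    normPullback L χ x = χ (Algebra.norm F x) := rfl

theorem normPullback_one : normPullback L (1 : MulChar F ℂ) = 1 := by
  ext u
  rw [normPullback_apply, MulChar.one_apply (u.isUnit.map _), MulChar.one_apply_coe]

theorem normPullback_pow (χ : MulChar F ℂ) (d : ℕ) :
    normPullback L χ ^ d = normPullback L (χ ^ d) := by
  ext u
  obtain ⟨v, hv⟩ := u.isUnit.map (Algebra.norm F)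
  rw [MulChar.pow_apply_coe, normPullback_apply, normPullback_apply, ← hv, MulChar.pow_apply_coe]

theorem normPullback_injective [Finite L] :
    Function.Injective (normPullback L : MulChar F ℂ → MulChar L ℂ) := by
  have : Finite F := Finite.of_injective _ (algebraMap F L).injective
  intro χ ψ h
  ext u
  obtain ⟨x, hx⟩ := FiniteField.norm_surjective F L (u : F)
  rw [← hx, ← normPullback_apply, h, normPullback_apply]

end NormPullback

section Weil

open Polynomial

variable {F : Type*} [Field F]

theorem natDegree_C_sub_X (c : F) : (C c - X).natDegree = 1 := by
  rw [← natDegree_neg, neg_sub, natDegree_X_sub_C]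

theorem C_sub_X_ne_zero (c : F) : C c - X ≠ 0 :=
  ne_zero_of_natDegree_gt (natDegree_C_sub_X c).ge

variable {ι : Type*} [Fintype F] [Fintype ι] {χ : MulChar F ℂ}

/-- The power sum is a complete character sum over the extension of degree `2 * n`, to which
Stepanov's bound applies. -/
theorem norm_lPowerSum_evalChar_le {d G n : ℕ} (hχ : χ ≠ 1) (hd : 0 < d) (hχd : χ ^ d = 1)
    (hdF : d ∣ Fintype.card F - 1) (b : ι → F) {e : ι → ℕ} (he : (∑ i, e i).Coprime d)
    (hn : n ≠ 0) (hG : (d - 1) * ∑ i, e i ≤ G) (hGn : G ^ 2 + 3 * G + 1 < Fintype.card F ^ n) :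
    ‖lPowerSum (evalChar χ b e) (2 * n)‖ ≤ (2 * G + 1 + ∑ i, e i) * Fintype.card F ^ n := by
  obtain ⟨p, hp⟩ := CharP.exists F
  obtain ⟨k, hprime, hk⟩ := FiniteField.card F p
  have : Fact p.Prime := ⟨hprime⟩
  have : NeZero (2 * n) := ⟨by omega⟩
  set L := FiniteField.Extension F p (2 * n)
  have : Fintype L := Fintype.ofFinite L
  have : CharP L p := (Algebra.charP_iff F L p).1 hp
  have : ExpChar L p := ExpChar.prime hprime
  have hrank : Module.finrank F L = 2 * n := FiniteField.finrank_extension F p (2 * n)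
  have hcard : Fintype.card L = (Fintype.card F ^ n) ^ 2 := by
    rw [← Nat.card_eq_fintype_card, FiniteField.natCard_extension, Nat.card_eq_fintype_card,
      ← pow_mul, mul_comm]
  set f : L[X] := ∏ i, (C (algebraMap F L (b i)) - X) ^ e i
  have hfi (i : ι) : (C (algebraMap F L (b i)) - X) ^ e i ≠ 0 := pow_ne_zero _ (C_sub_X_ne_zero _)
  have hdeg : f.natDegree = ∑ i, e i := by
    simp only [f, natDegree_prod _ _ fun i _ => hfi i, natDegree_pow, natDegree_C_sub_X, mul_one]
  have hdvd : d ∣ (Fintype.card F ^ n) ^ 2 - 1 := hdF.trans <| by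
    simpa only [pow_mul, one_pow] using Nat.sub_dvd_pow_sub_pow (Fintype.card F) 1 (n * 2)
  have hsum := norm_sum_mulChar_eval_le (f := f) (p := p) (by rw [hk, ← pow_mul]) hcard hd hdvd
    (hdeg ▸ he) (prod_ne_zero_iff.2 fun i _ => hfi i) (hdeg ▸ hG) hGn
    (ψ := normPullback L χ) (by rw [normPullback_pow, hχd, normPullback_one])
    (normPullback_one (F := F) L ▸ (normPullback_injective L).ne hχ)
  rw [← hrank, lPowerSum_evalChar_finrank L]
  simp only [f, eval_prod, eval_pow, eval_sub, eval_C, eval_X, map_prod, map_pow,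
    normPullback_apply] at hsum
  refine hsum.trans ?_
  have hone : (1 : ℝ) ≤ Fintype.card F ^ n := one_le_pow₀ (by exact_mod_cast Fintype.card_pos)
  rw [hdeg]
  push_cast
  rw [add_mul _ (∑ i, (e i : ℝ))]
  gcongr
  exact le_mul_of_one_le_right (by positivity) hone

/-- The `L`-function has reciprocal zeros `ω j`, at most one for each point; Stepanov's bound
over all extensions of even degree forces `‖ω j‖ ≤ √q`. -/
theorem norm_sum_prod_mulChar_sub_pow_le (hχ : χ ≠ 1) (b : ι → F) {e : ι → ℕ}
    (he : (∑ i, e i).Coprime (orderOf χ)) :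
    ‖∑ x, ∏ i, χ (b i - x) ^ e i‖ ≤ Fintype.card ι * √(Fintype.card F) := by
  have hne : χ ^ ∑ i, e i ≠ 1 := fun h =>
    hχ (orderOf_eq_one_iff.1 (Nat.Coprime.eq_one_of_dvd he.symm (orderOf_dvd_of_pow_eq_one h)))
  obtain ⟨γ, hγ⟩ := MulChar.ne_one_iff.1 hne
  rw [MulChar.pow_apply_coe] at hγ
  obtain ⟨ω, hω⟩ := exists_forall_eq_neg_sum_pow (lCoeff_zero (evalChar χ b e))
    (fun n hn => lCoeff_evalChar_eq_zero χ b e hγ hn.le) (natCast_mul_lCoeff (evalChar χ b e))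
  set G := (orderOf χ - 1) * ∑ i, e i with hG
  have hsq (j : Fin (Fintype.card ι)) : ‖ω j ^ 2‖ ≤ Fintype.card F := by
    refine norm_le_of_eventually_norm_sum_pow_le (z := fun j => ω j ^ 2)
      (C := 2 * G + 1 + ∑ i, e i) (by exact_mod_cast Fintype.card_pos)
      (Filter.eventually_atTop.2 ⟨G ^ 2 + 3 * G + 1, fun n hn => ?_⟩) j
    have hbound := norm_lPowerSum_evalChar_le hχ (orderOf_pos χ) (pow_orderOf_eq_one χ)
      (MulChar.orderOf_dvd_card_sub_one F χ) b he (n := n) (by omega) hG.ge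
      (hn.trans_lt (Nat.lt_pow_self Fintype.one_lt_card))
    rw [hω (2 * n) (by omega), norm_neg] at hbound
    simpa only [← pow_mul] using hbound
  have hroot (j : Fin (Fintype.card ι)) : ‖ω j‖ ≤ √(Fintype.card F) :=
    Real.le_sqrt_of_sq_le (norm_pow (ω j) 2 ▸ hsq j)
  have hS := (lPowerSum_evalChar_finrank F χ b e).symm.trans
    ((congrArg _ (Module.finrank_self F)).trans (hω 1 le_rfl))
  simp only [Algebra.norm_self, Algebra.algebraMap_self, RingHom.id_apply, MonoidHom.id_apply,
    pow_one] at hS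
  rw [hS, norm_neg]
  refine (norm_sum_le_of_le _ fun j _ => hroot j).trans_eq ?_
  rw [sum_const, card_univ, Fintype.card_fin, nsmul_eq_mul]

end Weil

section MulCharValues

variable {F : Type*} [Field F] (χ : MulChar F ℂ)

variable {χ} in
theorem mulChar_pow_eq_one {n : ℕ} (hn : orderOf χ ∣ n) {x : F} (hx : x ≠ 0) : χ x ^ n = 1 := by
  rw [← Units.val_mk0 hx, ← MulChar.pow_apply_coe, orderOf_dvd_iff_pow_eq_one.1 hn,
    MulChar.one_apply_coe]

theorem norm_mulChar_le_one [Finite F] (x : F) : ‖χ x‖ ≤ 1 := by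
  rcases eq_or_ne x 0 with rfl | hx
  · simp only [MulChar.map_zero, norm_zero, zero_le_one]
  · exact (Complex.norm_eq_one_of_pow_eq_one (mulChar_pow_eq_one dvd_rfl hx) χ.orderOf_pos.ne').le

variable {χ} in
theorem one_lt_orderOf_mulChar [Finite F] (hχ : χ ≠ 1) : 1 < orderOf χ :=
  lt_of_le_of_ne χ.orderOf_pos fun h => hχ (orderOf_eq_one_iff.1 h.symm)

variable {χ} in
theorem conj_mulChar_eq_pow [Finite F] (hχ : χ ≠ 1) (x : F) :
    (starRingEnd ℂ) (χ x) = χ x ^ (orderOf χ - 1) := by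
  have hinv : χ⁻¹ = χ ^ (orderOf χ - 1) := inv_eq_of_mul_eq_one_right <| by
    rw [← pow_succ', Nat.sub_add_cancel χ.orderOf_pos, pow_orderOf_eq_one]
  rw [starRingEnd_apply, MulChar.star_apply', hinv,
    MulChar.pow_apply' χ (Nat.sub_pos_of_lt (one_lt_orderOf_mulChar hχ)).ne']

theorem norm_prod_mulChar_pow_le_one [Finite F] {ι : Type*} (s : Finset ι) (y : ι → F)
    (e : ι → ℕ) : ‖∏ i ∈ s, χ (y i) ^ e i‖ ≤ 1 := by
  rw [norm_prod]
  refine prod_le_one (fun i _ => norm_nonneg _) fun i _ => ?_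
  rw [norm_pow]
  exact pow_le_one₀ (norm_nonneg _) (norm_mulChar_le_one χ _)

end MulCharValues

section Mobius

variable {F ι : Type*} [Field F] [Fintype F] [Fintype ι] {χ : MulChar F ℂ}
  {a : ι → F} {e : ι → ℕ} {i₀ : ι}

/-- The substitution `x = a i₀ + z⁻¹` moves the pole `a i₀` to infinity. -/
theorem sum_prod_mulChar_sub_pow_eq (he : orderOf χ ∣ ∑ i, e i) (he₀ : e i₀ ≠ 0) :
    ∑ x, ∏ i, χ (x - a i) ^ e i = ∑ z, ∏ i, χ (1 - (a i - a i₀) * z) ^ e i - 1 := by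
  classical
  have hsubst {z : F} (hz : z ≠ 0) :
      ∏ i, χ (1 - (a i - a i₀) * z) ^ e i = ∏ i, χ (a i₀ + z⁻¹ - a i) ^ e i := by
    have hfactor (i : ι) : a i₀ + z⁻¹ - a i = z⁻¹ * (1 - (a i - a i₀) * z) := by
      field_simp
      ring
    simp only [hfactor, map_mul, mul_pow, prod_mul_distrib]
    rw [prod_pow_eq_pow_sum, mulChar_pow_eq_one he (inv_ne_zero hz), one_mul]
  have hpole : ∏ i, χ (a i₀ - a i) ^ e i = 0 :=
    prod_eq_zero (mem_univ i₀) (by rw [sub_self, MulChar.map_zero, zero_pow he₀])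
  rw [← add_sum_erase _ _ (mem_univ (a i₀)), hpole, zero_add,
    ← add_sum_erase _ _ (mem_univ (0 : F))]
  simp only [mul_zero, sub_zero, map_one, one_pow, prod_const_one, add_sub_cancel_left]
  refine sum_bij' (fun x _ => (x - a i₀)⁻¹) (fun z _ => a i₀ + z⁻¹) ?_ ?_ ?_ ?_ ?_
  · intro x hx
    simpa [sub_eq_zero] using hx
  · intro z hz
    simpa using hz
  · intro x _
    simp
  · intro z _
    simp
  · intro x hx
    rw [hsubst (inv_ne_zero (sub_ne_zero.2 (ne_of_mem_erase hx))), inv_inv,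
      add_sub_cancel]

theorem norm_sum_prod_mulChar_one_sub_mul_pow_le (hχ : χ ≠ 1) (he : orderOf χ ∣ ∑ i, e i)
    (he₀ : (e i₀).Coprime (orderOf χ)) (ha : ∀ i, i ≠ i₀ → a i ≠ a i₀) :
    ‖∑ z, ∏ i, χ (1 - (a i - a i₀) * z) ^ e i‖ ≤ (Fintype.card ι - 1) * √(Fintype.card F) := by
  classical
  have hcop : (∑ i : {i // i ≠ i₀}, e i).Coprime (orderOf χ) := by
    rw [Fintype.sum_eq_add_sum_subtype_ne e i₀] at he
    refine (Nat.coprime_of_dvd fun q hq hqd hqs => hq.one_lt.ne' ?_).symm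
    exact Nat.eq_one_of_dvd_coprimes he₀ ((Nat.dvd_add_left hqs).1 (hqd.trans he)) hqd
  have hfactor (z : F) : ∏ i, χ (1 - (a i - a i₀) * z) ^ e i
      = (∏ i : {i // i ≠ i₀}, χ (a i - a i₀) ^ e i)
        * ∏ i : {i // i ≠ i₀}, χ ((a i - a i₀)⁻¹ - z) ^ e i := by
    rw [Fintype.prod_eq_mul_prod_subtype_ne _ i₀, sub_self, zero_mul, sub_zero, map_one, one_pow,
      one_mul, ← prod_mul_distrib]
    refine prod_congr rfl fun i _ => ?_
    rw [← mul_pow, ← map_mul, mul_sub, mul_inv_cancel₀ (sub_ne_zero.2 (ha i i.2))]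
  have hcard : (Fintype.card {i // i ≠ i₀} : ℝ) = Fintype.card ι - 1 := by
    rw [Fintype.card_subtype_compl (· = i₀), Fintype.card_subtype_eq,
      Nat.cast_sub (Fintype.card_pos_iff.2 ⟨i₀⟩), Nat.cast_one]
  rw [sum_congr rfl fun z _ => hfactor z, ← mul_sum, norm_mul, ← hcard]
  refine (mul_le_of_le_one_left (norm_nonneg _) (norm_prod_mulChar_pow_le_one χ _ _ _)).trans ?_
  exact norm_sum_prod_mulChar_sub_pow_le hχ _ hcop

theorem norm_sum_prod_mulChar_sub_pow_le_of_dvd (hχ : χ ≠ 1) (he : orderOf χ ∣ ∑ i, e i)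
    (he₀ : (e i₀).Coprime (orderOf χ)) (ha : ∀ i, i ≠ i₀ → a i ≠ a i₀) :
    ‖∑ x, ∏ i, χ (x - a i) ^ e i‖ ≤ Fintype.card ι * √(Fintype.card F) := by
  have hne : e i₀ ≠ 0 := fun h =>
    hχ (orderOf_eq_one_iff.1 ((Nat.coprime_zero_left _).1 (h ▸ he₀)))
  have hsqrt : 1 ≤ √(Fintype.card F : ℝ) :=
    Real.one_le_sqrt.2 (by exact_mod_cast Fintype.card_pos)
  rw [sum_prod_mulChar_sub_pow_eq he hne]
  refine (norm_sub_le _ _).trans ?_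
  rw [norm_one]
  linarith [norm_sum_prod_mulChar_one_sub_mul_pow_le hχ he he₀ ha]

end Mobius

section Moment

theorem two_mul_card_image_le {κ α : Type*} [Fintype κ] [DecidableEq α] {τ : κ → α}
    (hτ : ∀ i, ∃ j, j ≠ i ∧ τ j = τ i) : 2 * #(univ.image τ) ≤ Fintype.card κ := by
  classical
  rw [← card_univ, card_eq_sum_card_image τ univ, mul_comm, ← smul_eq_mul]
  refine card_nsmul_le_sum _ _ _ fun b hb => ?_
  obtain ⟨i, -, rfl⟩ := mem_image.1 hb
  obtain ⟨j, hj, hji⟩ := hτ i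
  rw [← card_pair hj]
  refine card_le_card fun k hk => mem_filter.2 ⟨mem_univ k, ?_⟩
  rcases mem_insert.1 hk with rfl | hk
  · exact hji
  · rw [mem_singleton.1 hk]

open Classical in
theorem card_filter_forall_exists_ne_le {κ α : Type*} [Fintype κ] {r : ℕ}
    (hκ : Fintype.card κ = 2 * r) (A : Finset α) :
    #{τ ∈ Fintype.piFinset fun _ : κ => A | ∀ i, ∃ j, j ≠ i ∧ τ j = τ i}
      ≤ r ^ (2 * r) * #A ^ r := by
  set B := (univ : Finset (κ → Fin r)) ×ˢ Fintype.piFinset fun _ : Fin r => A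
  have hB : #B = r ^ (2 * r) * #A ^ r := by
    simp only [B, card_product, card_univ, Fintype.card_fun, Fintype.card_fin, hκ,
      Fintype.card_piFinset, prod_const]
  rw [← hB]
  refine (card_le_card fun τ hτ => ?_).trans
    (card_image_le (s := B) (f := fun x : (κ → Fin r) × (Fin r → α) => x.2 ∘ x.1))
  obtain ⟨hτA, hτ⟩ := mem_filter.1 hτ
  rw [Fintype.mem_piFinset] at hτA
  have hsurj : ∃ σ : Fin r → univ.image τ, Function.Surjective σ := by
    refine Function.exists_surjective_iff.2 ⟨?_, Function.Embedding.nonempty_of_card_le ?_⟩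
    · rcases isEmpty_or_nonempty κ with hempty | ⟨⟨i⟩⟩
      · obtain rfl : r = 0 := by simpa using hκ.symm
        exact ⟨finZeroElim⟩
      · exact ⟨fun _ => ⟨τ i, mem_image_of_mem τ (mem_univ i)⟩⟩
    · have := two_mul_card_image_le hτ
      rw [Fintype.card_coe, Fintype.card_fin]
      omega
  obtain ⟨σ, hσ⟩ := hsurj
  choose g hg using fun i => hσ ⟨τ i, mem_image_of_mem τ (mem_univ i)⟩
  refine mem_image.2 ⟨(g, fun j => (σ j : α)), ?_, funext fun i => congrArg Subtype.val (hg i)⟩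
  refine mem_product.2 ⟨mem_univ _, Fintype.mem_piFinset.2 fun j => ?_⟩
  obtain ⟨i, -, hi⟩ := mem_image.1 (σ j).2
  exact hi.subst (motive := (· ∈ A)) (hτA i)

variable {F : Type*} [Field F] {χ : MulChar F ℂ}

theorem ofReal_norm_sum_mulChar_pow [Finite F] (hχ : χ ≠ 1) (r : ℕ) (A : Finset F) (x : F) :
    ((‖∑ v ∈ A, χ (x - v)‖ ^ (2 * r) : ℝ) : ℂ)
      = ∑ τ ∈ Fintype.piFinset fun _ : Fin r ⊕ Fin r => A,
        ∏ i, χ (x - τ i) ^ i.elim (fun _ => 1) (fun _ => orderOf χ - 1) := by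
  rw [← prod_univ_sum (t := fun _ : Fin r ⊕ Fin r => A)
    (f := fun i v => χ (x - v) ^ i.elim (fun _ => 1) (fun _ => orderOf χ - 1))]
  simp only [Fintype.prod_sum_type, Sum.elim_inl, Sum.elim_inr, pow_one, prod_const, card_univ,
    Fintype.card_fin, ← conj_mulChar_eq_pow hχ, ← map_sum]
  rw [← mul_pow, Complex.mul_conj, Complex.normSq_eq_norm_sq, pow_mul]
  push_cast
  rfl

variable [Fintype F]

theorem norm_sum_prod_mulChar_sub_pow_le_of_isolated (hχ : χ ≠ 1) {r : ℕ}
    {τ : Fin r ⊕ Fin r → F} (hτ : ¬∀ i, ∃ j, j ≠ i ∧ τ j = τ i) :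
    ‖∑ x, ∏ i, χ (x - τ i) ^ i.elim (fun _ => 1) (fun _ => orderOf χ - 1)‖
      ≤ 2 * r * √(Fintype.card F) := by
  set e : Fin r ⊕ Fin r → ℕ := fun i => i.elim (fun _ => 1) (fun _ => orderOf χ - 1) with he
  have hdvd : orderOf χ ∣ ∑ i, e i := by
    simp only [he, Fintype.sum_sum_type, Sum.elim_inl, Sum.elim_inr, sum_const, card_univ,
      Fintype.card_fin, smul_eq_mul, ← mul_add, Nat.add_sub_cancel' χ.orderOf_pos, dvd_mul_left]
  have hcop (i) : (e i).Coprime (orderOf χ) := by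
    rcases i with _ | _
    · exact Nat.coprime_one_left _
    · exact (Nat.coprime_self_sub_left χ.orderOf_pos).2 (Nat.coprime_one_left _)
  push Not at hτ
  obtain ⟨i₀, hi₀⟩ := hτ
  have hbound := norm_sum_prod_mulChar_sub_pow_le_of_dvd hχ hdvd (hcop i₀) hi₀
  rwa [Fintype.card_sum, Fintype.card_fin, ← two_mul, Nat.cast_mul, Nat.cast_two] at hbound

/-- Only the tuples in which every value is repeated fail to have square root cancellation. -/
theorem sum_norm_sum_mulChar_pow_le (hχ : χ ≠ 1) (r : ℕ) (A : Finset F) :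
    ∑ x, ‖∑ v ∈ A, χ (x - v)‖ ^ (2 * r)
      ≤ 2 * r * #A ^ (2 * r) * √(Fintype.card F)
        + (r : ℝ) ^ (2 * r) * #A ^ r * Fintype.card F := by
  classical
  set T := Fintype.piFinset fun _ : Fin r ⊕ Fin r => A with hT
  set P : (Fin r ⊕ Fin r → F) → Prop := fun τ => ∀ i, ∃ j, j ≠ i ∧ τ j = τ i
  set S : (Fin r ⊕ Fin r → F) → ℂ := fun τ =>
    ∑ x, ∏ i, χ (x - τ i) ^ i.elim (fun _ => 1) (fun _ => orderOf χ - 1)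
  have hκ : Fintype.card (Fin r ⊕ Fin r) = 2 * r := by
    rw [Fintype.card_sum, Fintype.card_fin, two_mul]
  have hsum : ((∑ x, ‖∑ v ∈ A, χ (x - v)‖ ^ (2 * r) : ℝ) : ℂ) = ∑ τ ∈ T, S τ := by
    rw [Complex.ofReal_sum, sum_comm]
    exact sum_congr rfl fun x _ => ofReal_norm_sum_mulChar_pow hχ r A x
  have htrivial (τ) : ‖S τ‖ ≤ Fintype.card F := by
    refine (norm_sum_le_of_le _ fun x _ => norm_prod_mulChar_pow_le_one χ _ _ _).trans_eq ?_
    rw [sum_const, card_univ, nsmul_eq_mul, mul_one]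
  have hisolated : (#{τ ∈ T | ¬P τ} : ℝ) ≤ #A ^ (2 * r) := by
    refine mod_cast (card_filter_le T fun τ => ¬P τ).trans_eq ?_
    rw [hT, Fintype.card_piFinset, prod_const, card_univ, hκ]
  have hrepeated : (#{τ ∈ T | P τ} : ℝ) ≤ r ^ (2 * r) * #A ^ r := by
    have h : #{τ ∈ T | P τ} ≤ r ^ (2 * r) * #A ^ r := by
      convert card_filter_forall_exists_ne_le hκ A
    exact mod_cast h
  rw [← abs_of_nonneg (by positivity : 0 ≤ ∑ x, ‖∑ v ∈ A, χ (x - v)‖ ^ (2 * r)),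
    ← Real.norm_eq_abs, ← Complex.norm_real, hsum, ← sum_filter_not_add_sum_filter T P]
  calc ‖∑ τ ∈ T with ¬P τ, S τ + ∑ τ ∈ T with P τ, S τ‖
      ≤ #{τ ∈ T | ¬P τ} * (2 * r * √(Fintype.card F)) + #{τ ∈ T | P τ} * Fintype.card F := by
        simp only [← nsmul_eq_mul (#_), ← sum_const]
        exact norm_add_le_of_le (norm_sum_le_of_le _ fun τ hτ =>
          norm_sum_prod_mulChar_sub_pow_le_of_isolated hχ (mem_filter.1 hτ).2)
          (norm_sum_le_of_le _ fun τ _ => htrivial τ)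
    _ ≤ #A ^ (2 * r) * (2 * r * √(Fintype.card F))
        + r ^ (2 * r) * #A ^ r * Fintype.card F := by gcongr
    _ = _ := by ring

end Moment

section Maximal

theorem pow_sum_le_card_pow_mul_sum_pow {ι : Type*} (s : Finset ι) {f : ι → ℝ}
    (hf : ∀ i ∈ s, 0 ≤ f i) (n : ℕ) :
    (∑ i ∈ s, f i) ^ (n + 1) ≤ (#s : ℝ) ^ n * ∑ i ∈ s, f i ^ (n + 1) := by
  rcases s.eq_empty_or_nonempty with rfl | hs
  · simp
  · have hcard : (0 : ℝ) < (#s : ℝ) ^ n := pow_pos (mod_cast hs.card_pos) n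
    exact (div_le_iff₀' hcard).1 (pow_sum_div_card_le_sum_pow hf n)

theorem norm_sum_range_le_sum_dyadic {E : Type*} [SeminormedAddCommGroup E] (f : ℕ → E) {j L : ℕ}
    (hj : j < 2 ^ L) :
    ‖∑ i ∈ range j, f i‖
      ≤ ∑ l ∈ range L, ‖∑ i ∈ range (2 ^ l), f (2 * (j / 2 ^ (l + 1)) * 2 ^ l + i)‖ := by
  set S : ℕ → E := fun l => ∑ i ∈ range (j / 2 ^ l * 2 ^ l), f i with hS
  have hblock (l : ℕ) :
      ‖S l - S (l + 1)‖ ≤ ‖∑ i ∈ range (2 ^ l), f (2 * (j / 2 ^ (l + 1)) * 2 ^ l + i)‖ := by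
    have hdigit : j / 2 ^ l = 2 * (j / 2 ^ (l + 1)) + j / 2 ^ l % 2 := by
      rw [pow_succ, ← Nat.div_div_eq_div_mul, Nat.div_add_mod]
    have hstart : j / 2 ^ (l + 1) * 2 ^ (l + 1) = 2 * (j / 2 ^ (l + 1)) * 2 ^ l := by ring
    simp only [hS, hstart]
    rw [hdigit]
    rcases Nat.mod_two_eq_zero_or_one (j / 2 ^ l) with h | h <;> rw [h]
    · rw [add_zero, sub_self, norm_zero]
      exact norm_nonneg _
    · rw [add_mul, one_mul, sum_range_add, add_sub_cancel_left]
  have htelescope : ∑ i ∈ range j, f i = ∑ l ∈ range L, (S l - S (l + 1)) := by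
    rw [sum_range_sub' S]
    simp [hS, Nat.div_eq_of_lt hj]
  rw [htelescope]
  exact norm_sum_le_of_le _ fun l _ => hblock l

variable {p : ℕ}

/-- The maximal function `x ↦ max_{j ≤ J} |χ(x) + χ(x - 1) + ⋯ + χ(x - (j - 1))|` of the
incomplete sums of length at most `J`. -/
noncomputable def maxPartialSum (χ : MulChar (ZMod p) ℂ) (J : ℕ) (x : ZMod p) : ℝ :=
  (range (J + 1)).sup' nonempty_range_add_one fun j => ‖∑ v ∈ range j, χ (x - v)‖

theorem norm_sum_range_le_maxPartialSum (χ : MulChar (ZMod p) ℂ) {j J : ℕ} (hj : j ≤ J)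
    (x : ZMod p) : ‖∑ v ∈ range j, χ (x - v)‖ ≤ maxPartialSum χ J x :=
  le_sup' (fun j => ‖∑ v ∈ range j, χ (x - v)‖) (mem_range_succ_iff.2 hj)

theorem maxPartialSum_nonneg (χ : MulChar (ZMod p) ℂ) (J : ℕ) (x : ZMod p) :
    0 ≤ maxPartialSum χ J x :=
  (norm_nonneg _).trans (norm_sum_range_le_maxPartialSum χ J.zero_le x)

theorem norm_sum_Ico_le_two_mul_maxPartialSum (χ : MulChar (ZMod p) ℂ) {s t J : ℕ} (hst : s ≤ t)
    (ht : t ≤ J) (x : ZMod p) : ‖∑ v ∈ Ico s t, χ (x - v)‖ ≤ 2 * maxPartialSum χ J x := by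
  rw [sum_Ico_eq_sub _ hst, two_mul]
  exact norm_sub_le_of_le (norm_sum_range_le_maxPartialSum χ ht x)
    (norm_sum_range_le_maxPartialSum χ (hst.trans ht) x)

theorem maxPartialSum_pow_le (χ : MulChar (ZMod p) ℂ) {J L : ℕ} (hJ : J < 2 ^ L) (n : ℕ)
    (x : ZMod p) :
    maxPartialSum χ J x ^ (n + 1) ≤ (L : ℝ) ^ n * ∑ l ∈ range L, ∑ c ∈ range (2 ^ (L - l)),
      ‖∑ i ∈ range (2 ^ l), χ (x - (c * 2 ^ l + i : ℕ))‖ ^ (n + 1) := by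
  set B : ℕ → ℕ → ℝ := fun l c => ‖∑ i ∈ range (2 ^ l), χ (x - (c * 2 ^ l + i : ℕ))‖
  obtain ⟨j, hj, hmax⟩ := exists_mem_eq_sup' (nonempty_range_add_one (n := J))
    fun j => ‖∑ v ∈ range j, χ (x - v)‖
  have hjL : j < 2 ^ L := (mem_range_succ_iff.1 hj).trans_lt hJ
  have hc {l : ℕ} (hl : l ∈ range L) : 2 * (j / 2 ^ (l + 1)) < 2 ^ (L - l) := by
    calc 2 * (j / 2 ^ (l + 1)) ≤ j / 2 ^ l := by
          rw [pow_succ, ← Nat.div_div_eq_div_mul]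
          exact Nat.mul_div_le _ _
      _ < 2 ^ (L - l) := Nat.div_lt_of_lt_mul <| by
          rwa [← pow_add, Nat.add_sub_cancel' (mem_range.1 hl).le]
  calc maxPartialSum χ J x ^ (n + 1)
      = ‖∑ v ∈ range j, χ (x - v)‖ ^ (n + 1) := congrArg (· ^ (n + 1)) hmax
    _ ≤ (∑ l ∈ range L, B l (2 * (j / 2 ^ (l + 1)))) ^ (n + 1) := by
        gcongr
        exact norm_sum_range_le_sum_dyadic (fun v : ℕ => χ (x - v)) hjL
    _ ≤ (L : ℝ) ^ n * ∑ l ∈ range L, B l (2 * (j / 2 ^ (l + 1))) ^ (n + 1) := by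
        simpa only [card_range] using
          pow_sum_le_card_pow_mul_sum_pow (range L) (fun l _ => norm_nonneg _) n
    _ ≤ _ := by
        gcongr with l hl
        exact single_le_sum (f := fun c => B l c ^ (n + 1))
          (fun c _ => pow_nonneg (norm_nonneg _) _) (mem_range.2 (hc hl))

variable [Fact p.Prime] {χ : MulChar (ZMod p) ℂ}

theorem sum_norm_sum_range_mulChar_pow_le (hχ : χ ≠ 1) (r s : ℕ) {h : ℕ} (hh : h ≤ p) :
    ∑ x, ‖∑ i ∈ range h, χ (x - (s + i : ℕ))‖ ^ (2 * r)
      ≤ 2 * r * (h : ℝ) ^ (2 * r) * √p + (r : ℝ) ^ (2 * r) * (h : ℝ) ^ r * p := by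
  have hinj : Set.InjOn (fun i : ℕ => ((s + i : ℕ) : ZMod p)) (range h) := by
    intro i hi j hj hij
    rw [mem_coe, mem_range] at hi hj
    simp only [Nat.cast_add, add_right_inj] at hij
    rwa [ZMod.natCast_eq_natCast_iff', Nat.mod_eq_of_lt (hi.trans_le hh),
      Nat.mod_eq_of_lt (hj.trans_le hh)] at hij
  have hmoment := sum_norm_sum_mulChar_pow_le hχ r
    ((range h).image fun i : ℕ => ((s + i : ℕ) : ZMod p))
  simpa only [card_image_of_injOn hinj, card_range, ZMod.card, sum_image hinj] using hmoment

theorem sum_sum_norm_dyadic_block_pow_le (hχ : χ ≠ 1) {r : ℕ} (hr : r ≠ 0) {l L : ℕ} (hl : l ≤ L)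
    (hlp : 2 ^ l ≤ p) :
    ∑ x, ∑ c ∈ range (2 ^ (L - l)), ‖∑ i ∈ range (2 ^ l), χ (x - (c * 2 ^ l + i : ℕ))‖ ^ (2 * r)
      ≤ 2 * r * (2 ^ L : ℝ) ^ (2 * r) * √p + (r : ℝ) ^ (2 * r) * (2 ^ L : ℝ) ^ r * p := by
  have hpow {k : ℕ} (hk : k ≠ 0) : (2 : ℝ) ^ (L - l) * (2 ^ l) ^ k ≤ (2 ^ L) ^ k := by
    calc (2 : ℝ) ^ (L - l) * (2 ^ l) ^ k ≤ (2 ^ (L - l)) ^ k * (2 ^ l) ^ k := by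
          gcongr
          exact le_self_pow₀ (one_le_pow₀ one_le_two) hk
      _ = (2 ^ L) ^ k := by rw [← mul_pow, ← pow_add, Nat.sub_add_cancel hl]
  rw [sum_comm]
  refine (sum_le_card_nsmul _ _ _ fun c _ =>
    sum_norm_sum_range_mulChar_pow_le hχ r (c * 2 ^ l) hlp).trans ?_
  rw [card_range, nsmul_eq_mul]
  push_cast
  calc (2 : ℝ) ^ (L - l) *
        (2 * r * (2 ^ l) ^ (2 * r) * √p + (r : ℝ) ^ (2 * r) * (2 ^ l) ^ r * p)
      = 2 * r * (2 ^ (L - l) * (2 ^ l) ^ (2 * r)) * √p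
        + (r : ℝ) ^ (2 * r) * (2 ^ (L - l) * (2 ^ l) ^ r) * p := by ring
    _ ≤ _ := by
      gcongr
      · exact hpow (mul_ne_zero two_ne_zero hr)
      · exact hpow hr

theorem sum_maxPartialSum_pow_le (hχ : χ ≠ 1) {r : ℕ} (hr : r ≠ 0) {J L : ℕ} (hJ : J < 2 ^ L)
    (hL : 2 ^ L ≤ 2 * p) :
    ∑ x, maxPartialSum χ J x ^ (2 * r) ≤ (L : ℝ) ^ (2 * r) *
      (2 * r * (2 ^ L : ℝ) ^ (2 * r) * √p + (r : ℝ) ^ (2 * r) * (2 ^ L : ℝ) ^ r * p) := by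
  set W := 2 * r * (2 ^ L : ℝ) ^ (2 * r) * √p + (r : ℝ) ^ (2 * r) * (2 ^ L : ℝ) ^ r * p
  obtain ⟨n, hn⟩ : ∃ n, 2 * r = n + 1 := Nat.exists_eq_succ_of_ne_zero (mul_ne_zero two_ne_zero hr)
  have hlevel {l : ℕ} (hl : l ∈ range L) :
      ∑ x, ∑ c ∈ range (2 ^ (L - l)),
        ‖∑ i ∈ range (2 ^ l), χ (x - (c * 2 ^ l + i : ℕ))‖ ^ (2 * r) ≤ W := by
    refine sum_sum_norm_dyadic_block_pow_le hχ hr (mem_range.1 hl).le ?_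
    have : 2 ^ (l + 1) ≤ 2 ^ L := Nat.pow_le_pow_right two_pos (mem_range.1 hl)
    omega
  rw [hn] at hlevel ⊢
  refine (sum_le_sum fun x _ => maxPartialSum_pow_le χ hJ n x).trans ?_
  rw [← mul_sum, sum_comm, pow_succ, mul_assoc]
  gcongr
  simpa only [card_range, nsmul_eq_mul] using sum_le_card_nsmul (range L) _ W fun l => hlevel

end Maximal

section Asymptotics

theorem natCast_le_two_div_mul_two_pow_rpow {ε : ℝ} (hε : 0 < ε) (L : ℕ) :
    (L : ℝ) ≤ 2 / ε * ((2 : ℝ) ^ L) ^ ε := by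
  have hlog : L * Real.log 2 ≤ ((2 : ℝ) ^ L) ^ ε / ε := by
    simpa only [Real.log_pow] using Real.log_le_rpow_div (x := (2 : ℝ) ^ L) (by positivity) hε
  have hlog_two : (1 / 2 : ℝ) < Real.log 2 := by linarith [Real.log_two_gt_d9]
  calc (L : ℝ) ≤ 2 * (L * Real.log 2) := by nlinarith [L.cast_nonneg (α := ℝ)]
    _ ≤ 2 * (((2 : ℝ) ^ L) ^ ε / ε) := by gcongr
    _ = 2 / ε * ((2 : ℝ) ^ L) ^ ε := by ring

/-- For `V ^ (2 * r) ≤ p` both terms of the moment bound are `O(p ^ (3 / 2))`. -/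
theorem exists_sum_maxPartialSum_pow_le {r : ℕ} (hr : r ≠ 0) {ε : ℝ} (hε : 0 < ε) :
    ∃ C : ℝ, 0 < C ∧ ∀ (p : ℕ) [Fact p.Prime] (χ : MulChar (ZMod p) ℂ), χ ≠ 1 →
      ∀ V : ℕ, V ≠ 0 → V ^ (2 * r) ≤ p →
        ∑ x, maxPartialSum χ (V + 1) x ^ (2 * r) ≤ C * (p : ℝ) ^ ε * (p * √p) := by
  refine ⟨((2 / ε) ^ (2 * r) * ((4 : ℝ) ^ (2 * r)) ^ ε) *
    (2 * r * 4 ^ (2 * r) + (r : ℝ) ^ (2 * r) * 4 ^ r), by positivity, ?_⟩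
  intro p _ χ hχ V hV hVp
  have hp : 2 ≤ p := (Fact.out : p.Prime).two_le
  have hVp' : V + 1 ≤ p := by
    rcases le_or_gt V 1 with h | h
    · omega
    · exact (lt_self_pow₀ h (by omega)).trans_le hVp
  set L := Nat.log 2 (V + 1) + 1 with hL
  have hJ : V + 1 < 2 ^ L := Nat.lt_pow_succ_log_self one_lt_two _
  have hLV : 2 ^ L ≤ 2 * (V + 1) := by
    rw [hL, pow_succ, mul_comm]
    exact Nat.mul_le_mul_left 2 (Nat.pow_log_le_self 2 V.succ_ne_zero)
  have hD : (2 : ℝ) ^ L ≤ 4 * V := by exact_mod_cast (by omega : 2 ^ L ≤ 4 * V)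
  have hVr : (V : ℝ) ^ (2 * r) ≤ p := mod_cast hVp
  have hDr₂ : ((2 : ℝ) ^ L) ^ (2 * r) ≤ 4 ^ (2 * r) * p := by
    grw [hD, mul_pow, hVr]
  have hDr : ((2 : ℝ) ^ L) ^ r ≤ 4 ^ r * √p := by
    grw [hD, mul_pow, Real.le_sqrt_of_sq_le (by rwa [← pow_mul, mul_comm] : ((V : ℝ) ^ r) ^ 2 ≤ p)]
  have hLε : (L : ℝ) ^ (2 * r) ≤ (2 / ε) ^ (2 * r) * ((4 ^ (2 * r)) ^ ε * (p : ℝ) ^ ε) := by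
    calc (L : ℝ) ^ (2 * r) ≤ (2 / ε * ((2 : ℝ) ^ L) ^ ε) ^ (2 * r) := by
          gcongr
          exact natCast_le_two_div_mul_two_pow_rpow hε L
      _ = (2 / ε) ^ (2 * r) * (((2 : ℝ) ^ L) ^ (2 * r)) ^ ε := by
          rw [mul_pow, Real.rpow_pow_comm (by positivity)]
      _ ≤ (2 / ε) ^ (2 * r) * (4 ^ (2 * r) * p) ^ ε := by gcongr
      _ = _ := by rw [Real.mul_rpow (by positivity) (by positivity)]
  calc ∑ x, maxPartialSum χ (V + 1) x ^ (2 * r)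
      ≤ (L : ℝ) ^ (2 * r) * (2 * r * ((2 : ℝ) ^ L) ^ (2 * r) * √p
        + (r : ℝ) ^ (2 * r) * ((2 : ℝ) ^ L) ^ r * p) :=
        sum_maxPartialSum_pow_le hχ hr hJ (hLV.trans (Nat.mul_le_mul_left 2 hVp'))
    _ ≤ (2 / ε) ^ (2 * r) * ((4 ^ (2 * r)) ^ ε * (p : ℝ) ^ ε) *
        (2 * r * (4 ^ (2 * r) * p) * √p + (r : ℝ) ^ (2 * r) * (4 ^ r * √p) * p) := by gcongr
    _ = _ := by ring

theorem natCast_add_one_le_mul_pow_rpow {ε : ℝ} (hε : 0 < ε) {q : ℕ} (hq : 2 ≤ q) (v : ℕ) :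
    (v : ℝ) + 1 ≤ max 1 (2 / ε * 2 ^ ε) * ((q : ℝ) ^ v) ^ ε := by
  have hq' : (2 : ℝ) ≤ q := mod_cast hq
  calc (v : ℝ) + 1 ≤ 2 / ε * ((2 : ℝ) ^ (v + 1)) ^ ε :=
        mod_cast natCast_le_two_div_mul_two_pow_rpow hε (v + 1)
    _ = 2 / ε * 2 ^ ε * ((2 : ℝ) ^ v) ^ ε := by
        rw [pow_succ', Real.mul_rpow two_pos.le (by positivity), mul_assoc]
    _ ≤ _ := by
        gcongr
        exact le_max_right _ _

theorem natCast_add_one_le_pow_rpow {ε x : ℝ} (hx : 0 ≤ x) (h : 2 ≤ x ^ ε) (v : ℕ) :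
    (v : ℝ) + 1 ≤ (x ^ v) ^ ε := by
  calc (v : ℝ) + 1 ≤ 2 ^ v := mod_cast Nat.lt_two_pow_self
    _ ≤ (x ^ ε) ^ v := by gcongr
    _ = (x ^ v) ^ ε := Real.rpow_pow_comm hx ε v

theorem exists_card_divisors_le_mul_rpow {ε : ℝ} (hε : 0 < ε) :
    ∃ C : ℝ, 1 ≤ C ∧ ∀ n : ℕ, n ≠ 0 → (#n.divisors : ℝ) ≤ C * (n : ℝ) ^ ε := by
  set A : ℝ := max 1 (2 / ε * 2 ^ ε)
  have hA : 1 ≤ A := le_max_left _ _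
  obtain ⟨P, hP⟩ := exists_nat_gt ((2 : ℝ) ^ (1 / ε))
  have hlarge {q : ℕ} (hq : P ≤ q) : 2 ≤ (q : ℝ) ^ ε := by
    calc (2 : ℝ) = (2 ^ (1 / ε)) ^ ε := by
          rw [← Real.rpow_mul two_pos.le, one_div_mul_cancel hε.ne', Real.rpow_one]
      _ ≤ (q : ℝ) ^ ε := by
          gcongr
          exact hP.le.trans (mod_cast hq)
  refine ⟨A ^ P, one_le_pow₀ hA, fun n hn => ?_⟩
  have hfactor : ∀ q ∈ n.primeFactors, ((n.factorization q + 1 : ℕ) : ℝ)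
      ≤ (if q < P then A else 1) * ((q : ℝ) ^ n.factorization q) ^ ε := by
    intro q hq
    push_cast
    split_ifs with h
    · exact natCast_add_one_le_mul_pow_rpow hε (Nat.prime_of_mem_primeFactors hq).two_le _
    · rw [one_mul]
      exact natCast_add_one_le_pow_rpow q.cast_nonneg (hlarge (not_lt.1 h)) _
  have hn_prod : ∏ q ∈ n.primeFactors, ((q : ℝ) ^ n.factorization q) ^ ε = (n : ℝ) ^ ε := by
    rw [Real.finsetProd_rpow _ _ fun q _ => by positivity]
    congr 1
    exact_mod_cast Nat.prod_factorization_pow_eq_self hn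
  rw [Nat.card_divisors hn, Nat.cast_prod]
  refine (prod_le_prod (fun q _ => Nat.cast_nonneg _) hfactor).trans ?_
  rw [prod_mul_distrib, hn_prod, ← prod_filter, prod_const]
  gcongr
  refine (card_le_card fun q hq => ?_).trans_eq (card_range P)
  exact mem_range.2 (mem_filter.1 hq).2

end Asymptotics

section Divisors

variable {a b : ℤ} {K M N τ Z : ℕ}

theorem mem_divisors_natAbs {z : ℤ} (hz : z ≠ 0) {d : ℕ} (h : (d : ℤ) ∣ z) :
    d ∈ z.natAbs.divisors :=
  Nat.mem_divisors.2 ⟨Int.natCast_dvd.1 h, Int.natAbs_ne_zero.2 hz⟩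

theorem abs_mul_natCast_le (a : ℤ) {k : ℕ} (hk : k ≤ K) : |a * k| ≤ |a| * K := by
  rw [abs_mul, Nat.abs_cast]
  gcongr

theorem abs_mul_add_mul_mul_le (a b : ℤ) {k m n : ℕ} (hk : k ≤ K) (hm : m ≤ M) (hn : n ≤ N) :
    |a * k + b * m * n| ≤ |a| * K + |b| * M * N := by
  refine (abs_add_le _ _).trans (add_le_add (abs_mul_natCast_le a hk) ?_)
  rw [abs_mul, abs_mul, Nat.abs_cast, Nat.abs_cast]
  gcongr

theorem card_filter_mul_add_mul_mul_mem_le (hb : b ≠ 0) (W : Finset ℤ)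
    (hτ : ∀ z : ℤ, |z| ≤ Z → #z.natAbs.divisors ≤ τ) (hW : ∀ w ∈ W, |w| + |a| * K ≤ Z) :
    #{t ∈ Icc 1 K ×ˢ Icc 1 M ×ˢ Icc 1 N | a * t.1 + b * t.2.1 * t.2.2 ∈ W} ≤ K * #W * τ ^ 2 := by
  set D : ℕ × ℤ → Finset ℕ := fun x => (x.2 - a * x.1).natAbs.divisors
  have hsub : {t ∈ Icc 1 K ×ˢ Icc 1 M ×ˢ Icc 1 N | a * t.1 + b * t.2.1 * t.2.2 ∈ W}
      ⊆ (Icc 1 K ×ˢ W).biUnion fun x => {x.1} ×ˢ D x ×ˢ D x := by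
    rintro ⟨k, m, n⟩ ht
    simp only [mem_filter, mem_product, mem_Icc] at ht
    obtain ⟨⟨hk, ⟨hm, -⟩, hn, -⟩, hw⟩ := ht
    have hne : b * m * n ≠ 0 := by positivity
    simp only [mem_biUnion, mem_product, mem_singleton, mem_Icc]
    refine ⟨(k, a * k + b * m * n), ⟨hk, hw⟩, rfl, ?_, ?_⟩ <;> simp only [D, add_sub_cancel_left]
    · exact mem_divisors_natAbs hne ⟨b * n, by ring⟩
    · exact mem_divisors_natAbs hne ⟨b * m, by ring⟩
  have hD : ∀ x ∈ Icc 1 K ×ˢ W, #({x.1} ×ˢ D x ×ˢ D x) ≤ τ ^ 2 := by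
    intro x hx
    obtain ⟨hk, hw⟩ := mem_product.1 hx
    have hDx : #(D x) ≤ τ := hτ _ <| by
      linarith [abs_sub x.2 (a * x.1), abs_mul_natCast_le a (mem_Icc.1 hk).2, hW _ hw]
    rw [card_product, card_product, card_singleton, one_mul, sq]
    exact Nat.mul_le_mul hDx hDx
  calc _ ≤ #(Icc 1 K ×ˢ W) * τ ^ 2 :=
        (card_le_card hsub).trans (card_biUnion_le_card_mul _ _ _ hD)
    _ = K * #W * τ ^ 2 := by rw [card_product, Nat.card_Icc, Nat.add_sub_cancel]

theorem card_filter_mul_add_mul_mul_eq_le {n : ℕ} (hbn : b * n ≠ 0) (s : ℤ) :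
    #{t ∈ Icc 1 K ×ˢ Icc 1 M | a * t.1 + b * t.2 * n = s}
      ≤ #{δ ∈ range K | (n : ℤ) ∣ a * (δ : ℕ)} := by
  set S := {t ∈ Icc 1 K ×ˢ Icc 1 M | a * t.1 + b * t.2 * n = s}
  rcases S.eq_empty_or_nonempty with hS | hS
  · simp [hS]
  obtain ⟨⟨k₀, m₀⟩, h₀, hmin⟩ := exists_min_image S Prod.fst hS
  have heq {t : ℕ × ℕ} (ht : t ∈ S) : a * t.1 + b * t.2 * n = s := (mem_filter.1 ht).2
  refine card_le_card_of_injOn (fun t => t.1 - k₀) ?_ ?_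
  · rintro ⟨k, m⟩ ht
    have hk : k₀ ≤ k := hmin _ ht
    have hbox := (mem_product.1 (mem_filter.1 ht).1).1
    have hbox₀ := (mem_product.1 (mem_filter.1 h₀).1).1
    simp only [mem_Icc] at hbox hbox₀
    simp only [coe_filter, Set.mem_ofPred_eq, mem_range]
    refine ⟨by omega, b * (m₀ - m), ?_⟩
    rw [Nat.cast_sub hk]
    linear_combination heq ht - heq h₀
  · rintro ⟨k₁, m₁⟩ h₁ ⟨k₂, m₂⟩ h₂ h
    have hk₁ : k₀ ≤ k₁ := hmin _ h₁
    have hk₂ : k₀ ≤ k₂ := hmin _ h₂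
    have hsub : k₁ - k₀ = k₂ - k₀ := h
    obtain rfl : k₁ = k₂ := by omega
    have hm : (m₁ : ℤ) = m₂ :=
      mul_left_cancel₀ hbn (by linear_combination heq h₁ - heq h₂)
    rw [Nat.cast_inj.1 hm]

theorem sum_card_filter_dvd_mul_le (ha : a ≠ 0)
    (hτ : ∀ z : ℤ, |z| ≤ Z → #z.natAbs.divisors ≤ τ) (hZ : |a| * K ≤ Z) :
    ∑ n ∈ Icc 1 N, #{δ ∈ range K | ((n : ℕ) : ℤ) ∣ a * (δ : ℕ)} ≤ N + K * τ := by
  have hδ : ∀ δ ∈ range K, #{n ∈ Icc 1 N | ((n : ℕ) : ℤ) ∣ a * (δ : ℕ)}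
      ≤ (if δ = 0 then N else 0) + τ := by
    intro δ hδ
    split_ifs with h
    · refine (card_filter_le _ _).trans ?_
      rw [Nat.card_Icc, Nat.add_sub_cancel]
      exact Nat.le_add_right N τ
    · have hne : a * δ ≠ 0 := mul_ne_zero ha (mod_cast h)
      rw [zero_add]
      exact (card_le_card fun n hn => mem_divisors_natAbs hne (mem_filter.1 hn).2).trans
        (hτ _ ((abs_mul_natCast_le a (mem_range.1 hδ).le).trans hZ))
  calc ∑ n ∈ Icc 1 N, #{δ ∈ range K | ((n : ℕ) : ℤ) ∣ a * (δ : ℕ)}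
      = ∑ δ ∈ range K, #{n ∈ Icc 1 N | ((n : ℕ) : ℤ) ∣ a * (δ : ℕ)} :=
        sum_card_bipartiteAbove_eq_sum_card_bipartiteBelow fun n δ : ℕ => (n : ℤ) ∣ a * δ
    _ ≤ ∑ δ ∈ range K, ((if δ = 0 then N else 0) + τ) := sum_le_sum hδ
    _ ≤ N + K * τ := by
        rw [sum_add_distrib, sum_ite_eq', sum_const, card_range, smul_eq_mul]
        split_ifs <;> omega

end Divisors

section Collisions

/-- The box of quadruples `(k, m, n, u)`. -/
def quadBox (K M N U : ℕ) : Finset (ℕ × ℕ × ℕ × ℕ) :=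
  Icc 1 K ×ˢ Icc 1 M ×ˢ Icc 1 N ×ˢ Icc 1 U

/-- The integer `a k + b m n` attached to `q = (k, m, n, u)`. -/
def shiftNumer (a b : ℤ) (q : ℕ × ℕ × ℕ × ℕ) : ℤ :=
  a * q.1 + b * q.2.1 * q.2.2.1

/-- The integer `u n` attached to `q = (k, m, n, u)`. -/
def shiftDenom (q : ℕ × ℕ × ℕ × ℕ) : ℕ :=
  q.2.2.2 * q.2.2.1

/-- The pairs of quadruples whose fractions `(a k + b m n) / (u n)` agree modulo `p`, with
denominators cleared. -/
def collisions (p : ℕ) (a b : ℤ) (K M N U : ℕ) :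
    Finset ((ℕ × ℕ × ℕ × ℕ) × (ℕ × ℕ × ℕ × ℕ)) :=
  {t ∈ quadBox K M N U ×ˢ quadBox K M N U |
    (p : ℤ) ∣ shiftNumer a b t.1 * shiftDenom t.2 - shiftNumer a b t.2 * shiftDenom t.1}

/-- The value which `(a k' + b m' n') u n` must take in a collision whose numerators, cleared of
denominators, differ by `c`. -/
def crossTerm (a b : ℤ) (k m n' u' : ℕ) (c : ℤ) (n : ℕ) : ℤ :=
  (a * k + b * m * n) * (u' * n') - c

/-- The tuples `(n, u, k', m')` completing `k, m, n', u'` to a pair of quadruples for which the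
difference of the numerators, cleared of denominators, is `c` and the second numerator is not
zero. -/
def nondegenerateCompletions (a b : ℤ) (K M N U k m n' u' : ℕ) (c : ℤ) :
    Finset (ℕ × ℕ × ℕ × ℕ) :=
  {t ∈ Icc 1 N ×ˢ Icc 1 U ×ˢ Icc 1 K ×ˢ Icc 1 M | a * t.2.2.1 + b * t.2.2.2 * n' ≠ 0 ∧
    (a * t.2.2.1 + b * t.2.2.2 * n') * (t.2.1 * t.1) = crossTerm a b k m n' u' c t.1}

/-- The multiples of `p` in `[-Z, Z]`. -/
noncomputable def smallMultiples (p Z : ℕ) : Finset ℤ :=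
  {c ∈ Icc (-(Z : ℤ)) Z | (p : ℤ) ∣ c}

theorem mem_quadBox {K M N U k m n u : ℕ} : (k, m, n, u) ∈ quadBox K M N U ↔
    (1 ≤ k ∧ k ≤ K) ∧ (1 ≤ m ∧ m ≤ M) ∧ (1 ≤ n ∧ n ≤ N) ∧ (1 ≤ u ∧ u ≤ U) := by
  simp only [quadBox, mem_product, mem_Icc]

variable {p : ℕ} {a b : ℤ} {K M N U τ Z : ℕ}

theorem not_dvd_natCast_of_lt {x : ℕ} (hx : 1 ≤ x) (hxp : x < p) : ¬(p : ℤ) ∣ x :=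
  fun h => Nat.not_dvd_of_pos_of_lt hx hxp (Int.natCast_dvd_natCast.1 h)

theorem mem_smallMultiples {c : ℤ} : c ∈ smallMultiples p Z ↔ |c| ≤ Z ∧ (p : ℤ) ∣ c := by
  rw [smallMultiples, mem_filter, mem_Icc, abs_le]

theorem card_smallMultiples_le (hp : 0 < p) : #(smallMultiples p Z) ≤ 2 * (Z / p) + 1 := by
  have hsub : smallMultiples p Z ⊆
      (Icc (-((Z / p : ℕ) : ℤ)) (Z / p : ℕ)).image fun h => (p : ℤ) * h := by
    intro c hc
    obtain ⟨hZ, h, rfl⟩ := mem_smallMultiples.1 hc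
    rw [abs_mul, Nat.abs_cast, mul_comm] at hZ
    refine mem_image_of_mem _ ?_
    rwa [mem_Icc, ← abs_le, Int.natCast_div, Int.le_ediv_iff_mul_le (mod_cast hp)]
  refine ((card_le_card hsub).trans card_image_le).trans (le_of_eq ?_)
  rw [Int.card_Icc]
  omega

theorem abs_crossTerm_le (hZ : (|a| * K + |b| * M * N) * (U * N) ≤ Z) {k m n n' u' : ℕ}
    (hk : k ≤ K) (hm : m ≤ M) (hn : n ≤ N) (hn' : n' ≤ N) (hu' : u' ≤ U) {c : ℤ} (hc : |c| ≤ Z) :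
    |crossTerm a b k m n' u' c n| ≤ 2 * Z := by
  have hprod : |(a * k + b * m * n) * (u' * n')| ≤ (|a| * K + |b| * M * N) * (U * N) := by
    rw [abs_mul, abs_of_nonneg (by positivity : (0 : ℤ) ≤ u' * n')]
    gcongr
    exact abs_mul_add_mul_mul_le a b hk hm hn
  unfold crossTerm
  linarith [abs_sub ((a * k + b * m * n) * (u' * n')) c]

-- The variable `n` divides `a k u' n' - c`, and then `u` divides `(a k + b m n) u' n' - c`; the
-- pair `(n, u)` determines the value of `a k' + b m' n'`.
theorem nondegenerateCompletions_subset {k m n' u' : ℕ} {c : ℤ} (hc : a * k * (u' * n') ≠ c) :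
    nondegenerateCompletions a b K M N U k m n' u' c ⊆
      {n ∈ (crossTerm a b k m n' u' c 0).natAbs.divisors | n ≤ N}.biUnion fun n =>
        (crossTerm a b k m n' u' c n).natAbs.divisors.biUnion fun u => {n} ×ˢ {u} ×ˢ
          {t ∈ Icc 1 K ×ˢ Icc 1 M |
            a * t.1 + b * t.2 * n' = crossTerm a b k m n' u' c n / (u * n)} := by
  rintro ⟨n, u, k', m'⟩ ht
  simp only [nondegenerateCompletions, mem_filter, mem_product, mem_Icc] at ht
  obtain ⟨⟨⟨hn, hnN⟩, ⟨hu, -⟩, hk', hm'⟩, hs, heq⟩ := ht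
  have hun : (u * n : ℤ) ≠ 0 := by positivity
  have hcross₀ : crossTerm a b k m n' u' c 0 =
      n * ((a * k' + b * m' * n') * u - b * m * (u' * n')) := by
    simp only [crossTerm, Nat.cast_zero] at heq ⊢
    linear_combination -heq
  have hcross₀_ne : crossTerm a b k m n' u' c 0 ≠ 0 := by
    simp only [crossTerm, Nat.cast_zero, mul_zero, add_zero]
    exact sub_ne_zero.2 hc
  simp only [mem_biUnion, mem_product, mem_singleton, mem_filter, mem_Icc]
  exact ⟨n, ⟨mem_divisors_natAbs hcross₀_ne ⟨_, hcross₀⟩, hnN⟩, u,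
    mem_divisors_natAbs (heq ▸ mul_ne_zero hs hun)
      ⟨(a * k' + b * m' * n') * n, by rw [← heq]; ring⟩,
    rfl, rfl, ⟨hk', hm'⟩, Int.eq_ediv_of_mul_eq_left hun heq⟩

theorem card_nondegenerateCompletions_le (hb : b ≠ 0)
    (hτ : ∀ z : ℤ, |z| ≤ 2 * Z → #z.natAbs.divisors ≤ τ)
    (hZ : (|a| * K + |b| * M * N) * (U * N) ≤ Z) {k m n' u' : ℕ} (hk : k ≤ K) (hm : m ≤ M)
    (hn'₀ : n' ≠ 0) (hn' : n' ≤ N) (hu' : u' ≤ U) {c : ℤ} (hcZ : |c| ≤ Z)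
    (hc : a * k * (u' * n') ≠ c) :
    #(nondegenerateCompletions a b K M N U k m n' u' c) ≤
      τ ^ 2 * #{δ ∈ range K | (n' : ℤ) ∣ a * (δ : ℕ)} := by
  set g := #{δ ∈ range K | (n' : ℤ) ∣ a * (δ : ℕ)}
  have hdiv {n : ℕ} (hn : n ≤ N) : #(crossTerm a b k m n' u' c n).natAbs.divisors ≤ τ :=
    hτ _ (abs_crossTerm_le hZ hk hm hn hn' hu' hcZ)
  refine (card_le_card (nondegenerateCompletions_subset hc)).trans ?_
  calc _ ≤ #{n ∈ (crossTerm a b k m n' u' c 0).natAbs.divisors | n ≤ N} * (τ * g) := by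
        refine card_biUnion_le_card_mul _ _ _ fun n hn => ?_
        refine (card_biUnion_le_card_mul _ _ g fun u _ => ?_).trans
          (Nat.mul_le_mul_right g (hdiv (mem_filter.1 hn).2))
        simp only [card_product, card_singleton, one_mul]
        exact card_filter_mul_add_mul_mul_eq_le (mul_ne_zero hb (mod_cast hn'₀)) _
    _ ≤ τ * (τ * g) := Nat.mul_le_mul_right _ ((card_filter_le _ _).trans (hdiv N.zero_le))
    _ = τ ^ 2 * g := by ring

theorem shiftNumer_mul_sub_mem_smallMultiples
    (hZ : 2 * ((|a| * K + |b| * M * N) * (U * N)) ≤ Z) {q q' : ℕ × ℕ × ℕ × ℕ}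
    (hq : (q, q') ∈ collisions p a b K M N U) :
    shiftNumer a b q * shiftDenom q' - shiftNumer a b q' * shiftDenom q ∈
      smallMultiples p Z := by
  obtain ⟨k, m, n, u⟩ := q
  obtain ⟨k', m', n', u'⟩ := q'
  obtain ⟨hbox, hdvd⟩ := mem_filter.1 hq
  simp only [mem_product, mem_quadBox] at hbox
  obtain ⟨⟨⟨-, hk⟩, ⟨-, hm⟩, ⟨-, hn⟩, -, hu⟩, ⟨-, hk'⟩, ⟨-, hm'⟩, ⟨-, hn'⟩, -, hu'⟩ := hbox
  have hle {k m n u n' : ℕ} (hk : k ≤ K) (hm : m ≤ M) (hn : n ≤ N) (hu : u ≤ U) (hn' : n' ≤ N) :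
      |(a * k + b * m * n) * ((u * n' : ℕ) : ℤ)| ≤ (|a| * K + |b| * M * N) * (U * N) := by
    rw [abs_mul, Nat.abs_cast, Nat.cast_mul]
    gcongr
    exact abs_mul_add_mul_mul_le a b hk hm hn
  refine mem_smallMultiples.2 ⟨?_, hdvd⟩
  simp only [shiftNumer, shiftDenom]
  linarith [hle hk hm hn hu' hn', hle hk' hm' hn' hu hn,
    abs_sub ((a * k + b * m * n) * ((u' * n' : ℕ) : ℤ))
      ((a * k' + b * m' * n') * ((u * n : ℕ) : ℤ))]

theorem filter_shiftNumer_ne_zero_subset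
    (hZ : 2 * ((|a| * K + |b| * M * N) * (U * N)) ≤ Z) :
    {t ∈ collisions p a b K M N U | shiftNumer a b t.2 ≠ 0} ⊆
      (Icc 1 N ×ˢ Icc 1 K ×ˢ Icc 1 M ×ˢ Icc 1 U ×ˢ smallMultiples p Z).biUnion
        fun (n', k, m, u', c) => (nondegenerateCompletions a b K M N U k m n' u' c).image
          fun (n, u, k', m') => ((k, m, n, u), (k', m', n', u')) := by
  rintro ⟨⟨k, m, n, u⟩, ⟨k', m', n', u'⟩⟩ ht
  obtain ⟨ht, hne⟩ := mem_filter.1 ht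
  have hc := shiftNumer_mul_sub_mem_smallMultiples hZ ht
  have hbox := (mem_filter.1 ht).1
  simp only [mem_product, mem_quadBox, shiftNumer, shiftDenom, Nat.cast_mul] at hbox hne hc
  have hmem : (n, u, k', m') ∈ nondegenerateCompletions a b K M N U k m n' u'
      ((a * k + b * m * n) * (u' * n') - (a * k' + b * m' * n') * (u * n)) := by
    simp only [nondegenerateCompletions, mem_filter, mem_product, mem_Icc]
    exact ⟨by tauto, hne, (sub_sub_cancel _ _).symm⟩
  simp only [mem_biUnion, mem_image, mem_product, mem_Icc]
  exact ⟨(n', k, m, u', _), by tauto, (n, u, k', m'), hmem, rfl⟩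

theorem card_filter_shiftNumer_ne_zero_le (hp : p.Prime) (ha : ¬(p : ℤ) ∣ a) (hb : b ≠ 0)
    (hK : K < p) (hN : N < p) (hU : U < p)
    (hτ : ∀ z : ℤ, |z| ≤ 2 * Z → #z.natAbs.divisors ≤ τ)
    (haZ : |a| * K ≤ 2 * Z) (hZ : 2 * ((|a| * K + |b| * M * N) * (U * N)) ≤ Z) :
    #{t ∈ collisions p a b K M N U | shiftNumer a b t.2 ≠ 0}
      ≤ K * M * U * (2 * (Z / p) + 1) * (τ ^ 2 * (N + K * τ)) := by
  set I := Icc 1 N ×ˢ Icc 1 K ×ˢ Icc 1 M ×ˢ Icc 1 U ×ˢ smallMultiples p Z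
  have hfiber : ∀ i ∈ I,
      #(nondegenerateCompletions a b K M N U i.2.1 i.2.2.1 i.1 i.2.2.2.1 i.2.2.2.2) ≤
        τ ^ 2 * #{δ ∈ range K | (i.1 : ℤ) ∣ a * (δ : ℕ)} := by
    rintro ⟨n', k, m, u', c⟩ hi
    simp only [I, mem_product, mem_Icc, mem_smallMultiples] at hi
    obtain ⟨⟨hn₁, hn'⟩, ⟨hk₁, hk⟩, ⟨-, hm⟩, ⟨hu₁, hu'⟩, hcZ, hpc⟩ := hi
    have hpZ := Nat.prime_iff_prime_int.1 hp
    refine card_nondegenerateCompletions_le hb hτ ?_ hk hm (by omega) hn' hu' hcZ ?_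
    · linarith [show (0 : ℤ) ≤ (|a| * K + |b| * M * N) * (U * N) by positivity]
    · rintro rfl
      exact hpZ.not_dvd_mul (hpZ.not_dvd_mul ha (not_dvd_natCast_of_lt hk₁ (by omega)))
        (hpZ.not_dvd_mul (not_dvd_natCast_of_lt hu₁ (by omega))
          (not_dvd_natCast_of_lt hn₁ (by omega))) hpc
  have ha₀ : a ≠ 0 := fun h => ha (h ▸ dvd_zero _)
  calc _ ≤ ∑ i ∈ I, τ ^ 2 * #{δ ∈ range K | (i.1 : ℤ) ∣ a * (δ : ℕ)} :=
        (card_le_card (filter_shiftNumer_ne_zero_subset hZ)).trans <| card_biUnion_le.trans <|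
          sum_le_sum fun i hi => card_image_le.trans (hfiber i hi)
    _ = K * M * U * #(smallMultiples p Z) *
          (τ ^ 2 * ∑ n ∈ Icc 1 N, #{δ ∈ range K | ((n : ℕ) : ℤ) ∣ a * (δ : ℕ)}) := by
      simp only [I, sum_product, sum_const, smul_eq_mul, ← mul_sum, card_product, Nat.card_Icc,
        Nat.add_sub_cancel]
      ring
    _ ≤ _ := by
      gcongr
      · exact card_smallMultiples_le hp.pos
      · exact sum_card_filter_dvd_mul_le (Z := 2 * Z) ha₀ (mod_cast hτ) (mod_cast haZ)

theorem dvd_shiftNumer_of_mem_collisions (hp : p.Prime) (hN : N < p) (hU : U < p)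
    {q q' : ℕ × ℕ × ℕ × ℕ} (hq : (q, q') ∈ collisions p a b K M N U)
    (h₀ : shiftNumer a b q' = 0) : (p : ℤ) ∣ shiftNumer a b q := by
  obtain ⟨k', m', n', u'⟩ := q'
  obtain ⟨hbox, hdvd⟩ := mem_filter.1 hq
  simp only [mem_product, mem_quadBox] at hbox
  rw [h₀, zero_mul, sub_zero, shiftDenom, Nat.cast_mul] at hdvd
  have hpZ := Nat.prime_iff_prime_int.1 hp
  exact by_contra fun h => hpZ.not_dvd_mul h (hpZ.not_dvd_mul
    (not_dvd_natCast_of_lt (x := u') (by omega) (by omega))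
    (not_dvd_natCast_of_lt (x := n') (by omega) (by omega))) hdvd

theorem card_filter_shiftNumer_eq_zero_le (hp : p.Prime) (hb : b ≠ 0)
    (hN : N < p) (hU : U < p) (hτ : ∀ z : ℤ, |z| ≤ 2 * Z → #z.natAbs.divisors ≤ τ)
    (hZ : |a| * K + |b| * M * N ≤ Z) :
    #{t ∈ collisions p a b K M N U | shiftNumer a b t.2 = 0}
      ≤ K * (2 * (Z / p) + 1) * τ ^ 2 * (K * τ ^ 2 * (U * U)) := by
  have haZ : |a| * K ≤ Z := by linarith [show 0 ≤ |b| * M * N by positivity]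
  have hτ' : ∀ z : ℤ, |z| ≤ (2 * Z : ℕ) → #z.natAbs.divisors ≤ τ := mod_cast hτ
  set A : Finset ℤ → Finset (ℕ × ℕ × ℕ) := fun W =>
    {t ∈ Icc 1 K ×ˢ Icc 1 M ×ˢ Icc 1 N | a * t.1 + b * t.2.1 * t.2.2 ∈ W}
  have hA : #(A (smallMultiples p Z)) ≤ K * (2 * (Z / p) + 1) * τ ^ 2 := by
    refine (card_filter_mul_add_mul_mul_mem_le hb _ hτ' fun w hw => ?_).trans ?_
    · push_cast
      linarith [(mem_smallMultiples.1 hw).1]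
    · gcongr
      exact card_smallMultiples_le hp.pos
  have hA₀ : #(A {0}) ≤ K * τ ^ 2 := by
    have hW : ∀ w ∈ ({0} : Finset ℤ), |w| + |a| * K ≤ (2 * Z : ℕ) := by
      simp only [mem_singleton, forall_eq, abs_zero, zero_add]
      push_cast
      linarith
    simpa only [card_singleton, mul_one] using
      card_filter_mul_add_mul_mul_mem_le hb {0} hτ' hW
  have hsub : {t ∈ collisions p a b K M N U | shiftNumer a b t.2 = 0} ⊆
      (A (smallMultiples p Z) ×ˢ A {0} ×ˢ Icc 1 U ×ˢ Icc 1 U).image fun (s, s', u, u') =>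
        ((s.1, s.2.1, s.2.2, u), (s'.1, s'.2.1, s'.2.2, u')) := by
    rintro ⟨⟨k, m, n, u⟩, ⟨k', m', n', u'⟩⟩ ht
    obtain ⟨ht, h₀⟩ := mem_filter.1 ht
    have hdvd := dvd_shiftNumer_of_mem_collisions hp hN hU ht h₀
    have hbox := (mem_filter.1 ht).1
    simp only [mem_product, mem_quadBox, shiftNumer] at hbox hdvd h₀
    have hle := (abs_mul_add_mul_mul_le a b hbox.1.1.2 hbox.1.2.1.2 hbox.1.2.2.1.2).trans hZ
    simp only [mem_image, mem_product, A, mem_filter, mem_singleton, mem_smallMultiples, mem_Icc]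
    exact ⟨((k, m, n), (k', m', n'), u, u'), by tauto, rfl⟩
  calc _ ≤ #(A (smallMultiples p Z)) * (#(A {0}) * (U * U)) := by
        simpa [card_product] using (card_le_card hsub).trans card_image_le
    _ ≤ _ := by gcongr

theorem card_collisions_le (hp : p.Prime) (ha : ¬(p : ℤ) ∣ a) (hb : b ≠ 0)
    (hK : K < p) (hN : N < p) (hU : U < p) (hN₀ : 0 < N) (hU₀ : 0 < U) (hUM : U ≤ M)
    (hτ : ∀ z : ℤ, |z| ≤ 2 * Z → #z.natAbs.divisors ≤ τ)
    (hZ : 2 * ((|a| * K + |b| * M * N) * (U * N)) ≤ Z) :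
    #(collisions p a b K M N U) ≤
      2 * ((N + K) * K * U * M * (2 * (Z / p) + 1) * τ ^ 4) := by
  obtain ⟨hτ₂, hτ₃⟩ : τ ^ 2 ≤ τ ^ 4 ∧ τ ^ 3 ≤ τ ^ 4 := by
    rcases τ.eq_zero_or_pos with rfl | hpos
    · simp
    · exact ⟨Nat.pow_le_pow_right hpos (by norm_num), Nat.pow_le_pow_right hpos (by norm_num)⟩
  set H := 2 * (Z / p) + 1
  have hR : |a| * K + |b| * M * N ≤ Z :=
    (le_mul_of_one_le_right (b := (U * N : ℤ)) (by positivity)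
      (mod_cast Nat.mul_pos hU₀ hN₀)).trans (by
        linarith [show (0 : ℤ) ≤ (|a| * K + |b| * M * N) * (U * N) by positivity])
  have haZ : |a| * K ≤ 2 * Z := by linarith [show 0 ≤ |b| * M * N by positivity]
  have hnondeg : K * M * U * H * (τ ^ 2 * (N + K * τ)) ≤ (N + K) * K * U * M * H * τ ^ 4 :=
    calc _ = K * M * U * H * (N * τ ^ 2 + K * τ ^ 3) := by ring
      _ ≤ K * M * U * H * (N * τ ^ 4 + K * τ ^ 4) := Nat.mul_le_mul_left _
          (add_le_add (Nat.mul_le_mul_left N hτ₂) (Nat.mul_le_mul_left K hτ₃))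
      _ = _ := by ring
  have hdeg : K * H * τ ^ 2 * (K * τ ^ 2 * (U * U)) ≤ (N + K) * K * U * M * H * τ ^ 4 :=
    calc _ = K * K * U * U * H * τ ^ 4 := by ring
      _ ≤ (N + K) * K * U * M * H * τ ^ 4 := by gcongr; omega
  rw [← card_filter_add_card_filter_not fun t => shiftNumer a b t.2 = 0, two_mul]
  exact add_le_add ((card_filter_shiftNumer_eq_zero_le hp hb hN hU hτ hR).trans hdeg)
    ((card_filter_shiftNumer_ne_zero_le hp ha hb hK hN hU hτ haZ hZ).trans hnondeg)

end Collisions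

section Shift

/-- The sum `∑ β_{k,n} χ(a k + b m n)` over `1 ≤ k ≤ K`, `1 ≤ m ≤ M`, `1 ≤ n ≤ N`. -/
noncomputable def trilinearSum {p : ℕ} (χ : MulChar (ZMod p) ℂ) (a b : ℤ) (β : ℕ → ℕ → ℂ)
    (K M N : ℕ) : ℂ :=
  ∑ k ∈ Icc 1 K, ∑ m ∈ Icc 1 M, ∑ n ∈ Icc 1 N, β k n * χ ((a * k + b * m * n : ℤ) : ZMod p)

theorem sum_Icc_eq_sum_filter_sub {E : Type*} [AddCommMonoid E] (f : ℤ → E) {M d : ℕ}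
    (hd : d ≤ M) : ∑ m ∈ Icc 1 M, f m = ∑ m ∈ Icc 1 (2 * M) with d < m ∧ m ≤ M + d, f (m - d) := by
  refine sum_nbij' (· + d) (· - d) ?_ ?_ ?_ ?_ ?_
  · intro m hm
    simp only [mem_Icc, mem_filter] at hm ⊢
    omega
  · intro m hm
    simp only [mem_Icc, mem_filter] at hm ⊢
    omega
  · intro m _
    exact Nat.add_sub_cancel m d
  · intro m hm
    simp only [mem_filter] at hm
    exact Nat.sub_add_cancel hm.2.1.le
  · intro m _
    rw [Nat.cast_add, add_sub_cancel_right]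

theorem nsmul_sum_Icc_eq_sum_sum_sub {E : Type*} [AddCommMonoid E] (f : ℤ → E) {M U V : ℕ}
    (hUV : U * V ≤ M) : (U * V) • ∑ m ∈ Icc 1 M, f m =
      ∑ m ∈ Icc 1 (2 * M), ∑ u ∈ Icc 1 U, ∑ v ∈ Icc 1 V with u * v < m ∧ m ≤ M + u * v,
        f (m - (u * v : ℕ)) := by
  simp only [sum_filter]
  calc (U * V) • ∑ m ∈ Icc 1 M, f m = ∑ u ∈ Icc 1 U, ∑ v ∈ Icc 1 V, ∑ m ∈ Icc 1 M, f m := by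
        simp only [sum_const, Nat.card_Icc, Nat.add_sub_cancel, mul_nsmul']
    _ = ∑ u ∈ Icc 1 U, ∑ v ∈ Icc 1 V, ∑ m ∈ Icc 1 (2 * M),
          if u * v < m ∧ m ≤ M + u * v then f (m - (u * v : ℕ)) else 0 := by
        refine sum_congr rfl fun u hu => sum_congr rfl fun v hv => ?_
        rw [← sum_filter]
        exact sum_Icc_eq_sum_filter_sub f <|
          (Nat.mul_le_mul (mem_Icc.1 hu).2 (mem_Icc.1 hv).2).trans hUV
    _ = ∑ u ∈ Icc 1 U, ∑ m ∈ Icc 1 (2 * M), ∑ v ∈ Icc 1 V,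
          if u * v < m ∧ m ≤ M + u * v then f (m - (u * v : ℕ)) else 0 :=
        sum_congr rfl fun _ _ => sum_comm
    _ = _ := sum_comm

theorem exists_filter_mul_lt_eq_Ico (M V : ℕ) {u : ℕ} (hu : 0 < u) (m : ℕ) :
    ∃ s t : ℕ, s ≤ t ∧ t ≤ V + 1 ∧ {v ∈ Icc 1 V | u * v < m ∧ m ≤ M + u * v} = Ico s t := by
  set t := min V ((m - 1) / u) + 1
  set s := max 1 ((m - M + (u - 1)) / u)
  refine ⟨min s t, t, min_le_right _ _, by omega, ?_⟩
  ext v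
  have hupper : v ≤ (m - 1) / u ↔ u * v ≤ m - 1 := by rw [Nat.le_div_iff_mul_le hu, mul_comm]
  have hlower : (m - M + (u - 1)) / u < v + 1 ↔ m - M + (u - 1) < u * v + u := by
    rw [Nat.div_lt_iff_lt_mul hu, mul_comm, Nat.mul_succ]
  have hv : v = 0 ∨ 0 < u * v := v.eq_zero_or_pos.imp_right (Nat.mul_pos hu)
  simp only [mem_filter, mem_Icc, mem_Ico, s, t]
  omega

variable {p : ℕ} [Fact p.Prime]

/-- The residue `(a k + b m n) / (b u n)` attached to `q = (k, m, n, u)`: replacing `m` by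
`m - u v` translates it by `-v`. -/
noncomputable def shiftPoint (p : ℕ) [Fact p.Prime] (a b : ℤ) (q : ℕ × ℕ × ℕ × ℕ) : ZMod p :=
  (shiftNumer a b q : ZMod p) / (b * shiftDenom q)

theorem shiftPoint_eq_shiftPoint_iff {a b : ℤ} {q q' : ℕ × ℕ × ℕ × ℕ} (hb : (b : ZMod p) ≠ 0)
    (hq : (shiftDenom q : ZMod p) ≠ 0) (hq' : (shiftDenom q' : ZMod p) ≠ 0) :
    shiftPoint p a b q = shiftPoint p a b q' ↔
      (p : ℤ) ∣ shiftNumer a b q * shiftDenom q' - shiftNumer a b q' * shiftDenom q := by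
  rw [← ZMod.intCast_zmod_eq_zero_iff_dvd, shiftPoint, shiftPoint,
    div_eq_div_iff (mul_ne_zero hb hq) (mul_ne_zero hb hq'), mul_left_comm,
    mul_left_comm _ (b : ZMod p), mul_right_inj' hb, ← sub_eq_zero]
  push_cast
  rfl

theorem natCast_ne_zero_of_mem_Icc {n N : ℕ} (hn : n ∈ Icc 1 N) (hN : N < p) :
    (n : ZMod p) ≠ 0 := by
  rw [mem_Icc] at hn
  rw [Ne, ZMod.natCast_eq_zero_iff]
  exact Nat.not_dvd_of_pos_of_lt hn.1 (hn.2.trans_lt hN)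

theorem shiftDenom_ne_zero {K M N U : ℕ} (hN : N < p) (hU : U < p) {q : ℕ × ℕ × ℕ × ℕ}
    (hq : q ∈ quadBox K M N U) : (shiftDenom q : ZMod p) ≠ 0 := by
  simp only [quadBox, mem_product] at hq
  rw [shiftDenom, Nat.cast_mul]
  exact mul_ne_zero (natCast_ne_zero_of_mem_Icc hq.2.2.2 hU)
    (natCast_ne_zero_of_mem_Icc hq.2.2.1 hN)

theorem norm_sum_filter_shift_le (χ : MulChar (ZMod p) ℂ) {a b : ℤ} {k m n u : ℕ} (M V : ℕ)
    (hu₀ : 0 < u) (hb : (b : ZMod p) ≠ 0) (hu : (u : ZMod p) ≠ 0) (hn : (n : ZMod p) ≠ 0) :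
    ‖∑ v ∈ Icc 1 V with u * v < m ∧ m ≤ M + u * v,
        χ ((a * k + b * (m - (u * v : ℕ)) * n : ℤ) : ZMod p)‖
      ≤ 2 * maxPartialSum χ (V + 1) (shiftPoint p a b (k, m, n, u)) := by
  obtain ⟨s, t, hst, ht, hI⟩ := exists_filter_mul_lt_eq_Ico M V hu₀ m
  set x := shiftPoint p a b (k, m, n, u) with hx
  have hχ (v : ℕ) : χ ((a * k + b * (m - (u * v : ℕ)) * n : ℤ) : ZMod p) =
      χ (b * (u * n)) * χ (x - v) := by
    rw [← map_mul, hx, shiftPoint, shiftNumer, shiftDenom]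
    congr 1
    push_cast
    field_simp
    ring
  rw [hI, sum_congr rfl fun v _ => hχ v, ← mul_sum, norm_mul]
  calc _ ≤ 1 * ‖∑ v ∈ Ico s t, χ (x - v)‖ := by
        gcongr
        exact norm_mulChar_le_one χ _
    _ ≤ _ := (one_mul _).trans_le (norm_sum_Ico_le_two_mul_maxPartialSum χ hst ht x)

theorem mul_norm_trilinearSum_le (χ : MulChar (ZMod p) ℂ) {a b : ℤ} {β : ℕ → ℕ → ℂ}
    {K M N U V : ℕ} (hβ : ∀ k n, ‖β k n‖ ≤ 1) (hb : (b : ZMod p) ≠ 0) (hN : N < p) (hU : U < p)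
    (hUV : U * V ≤ M) : (U * V : ℕ) * ‖trilinearSum χ a b β K M N‖ ≤
      ∑ q ∈ quadBox K (2 * M) N U, 2 * maxPartialSum χ (V + 1) (shiftPoint p a b q) := by
  have hshift : (U * V : ℕ) * trilinearSum χ a b β K M N =
      ∑ k ∈ Icc 1 K, ∑ n ∈ Icc 1 N, ∑ m ∈ Icc 1 (2 * M), ∑ u ∈ Icc 1 U, β k n *
        ∑ v ∈ Icc 1 V with u * v < m ∧ m ≤ M + u * v,
          χ ((a * k + b * (m - (u * v : ℕ)) * n : ℤ) : ZMod p) := by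
    rw [trilinearSum, mul_sum]
    refine sum_congr rfl fun k _ => ?_
    rw [sum_comm, mul_sum]
    refine sum_congr rfl fun n _ => ?_
    rw [← mul_sum, mul_left_comm, ← nsmul_eq_mul,
      nsmul_sum_Icc_eq_sum_sum_sub (fun m => χ ((a * k + b * m * n : ℤ) : ZMod p)) hUV]
    simp only [mul_sum]
  have hbox : ∑ q ∈ quadBox K (2 * M) N U, 2 * maxPartialSum χ (V + 1) (shiftPoint p a b q) =
      ∑ k ∈ Icc 1 K, ∑ n ∈ Icc 1 N, ∑ m ∈ Icc 1 (2 * M), ∑ u ∈ Icc 1 U,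
        2 * maxPartialSum χ (V + 1) (shiftPoint p a b (k, m, n, u)) := by
    simp only [quadBox, sum_product]
    exact sum_congr rfl fun k _ => sum_comm
  rw [← Complex.norm_natCast, ← norm_mul, hshift, hbox]
  refine norm_sum_le_of_le _ fun k _ => norm_sum_le_of_le _ fun n hn =>
    norm_sum_le_of_le _ fun m _ => norm_sum_le_of_le _ fun u hu => ?_
  rw [norm_mul]
  calc _ ≤ 1 * _ := mul_le_mul (hβ k n)
        (norm_sum_filter_shift_le χ M V (mem_Icc.1 hu).1 hb (natCast_ne_zero_of_mem_Icc hu hU)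
          (natCast_ne_zero_of_mem_Icc hn hN)) (norm_nonneg _) zero_le_one
    _ = _ := one_mul _

end Shift

section Holder

theorem sum_comp_pow_le_card_pow_mul_card_mul_sum_pow {ι κ : Type*} [Fintype κ] [DecidableEq κ]
    (s : Finset ι) (x : ι → κ) {T : κ → ℝ} (hT : ∀ y, 0 ≤ T y) (n : ℕ) :
    (∑ i ∈ s, T (x i)) ^ (2 * (n + 1)) ≤
      (#s : ℝ) ^ (2 * n) * #{t ∈ s ×ˢ s | x t.1 = x t.2} * ∑ y, T y ^ (2 * (n + 1)) := by
  set ν : κ → ℝ := fun y => #{i ∈ s | x i = y}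
  have hfiber : ∑ i ∈ s, T (x i) ^ (n + 1) = ∑ y, ν y * T y ^ (n + 1) := by
    rw [← sum_fiberwise s x]
    refine sum_congr rfl fun y _ => ?_
    rw [sum_congr rfl fun i hi => by rw [(mem_filter.1 hi).2], sum_const, nsmul_eq_mul]
  have hν : ∑ y, ν y ^ 2 = (#{t ∈ s ×ˢ s | x t.1 = x t.2} : ℝ) := by
    rw [card_eq_sum_card_fiberwise (f := fun t => x t.1) (t := univ) (fun _ _ => mem_univ _)]
    push_cast
    refine sum_congr rfl fun y _ => ?_
    rw [sq, ← Nat.cast_mul, ← card_product]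
    congr 2
    ext t
    simp only [mem_product, mem_filter]
    grind
  calc (∑ i ∈ s, T (x i)) ^ (2 * (n + 1)) = ((∑ i ∈ s, T (x i)) ^ (n + 1)) ^ 2 := by ring
    _ ≤ ((#s : ℝ) ^ n * ∑ i ∈ s, T (x i) ^ (n + 1)) ^ 2 := by
      have hsum : 0 ≤ ∑ i ∈ s, T (x i) := sum_nonneg fun i _ => hT _
      gcongr
      exact pow_sum_le_card_pow_mul_sum_pow s (fun i _ => hT _) n
    _ = (#s : ℝ) ^ (2 * n) * (∑ y, ν y * T y ^ (n + 1)) ^ 2 := by rw [hfiber]; ring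
    _ ≤ (#s : ℝ) ^ (2 * n) * ((∑ y, ν y ^ 2) * ∑ y, (T y ^ (n + 1)) ^ 2) := by
      gcongr
      exact sum_mul_sq_le_sq_mul_sq _ _ _
    _ = _ := by
      rw [hν, ← mul_assoc]
      simp only [← pow_mul, mul_comm (n + 1) 2]

theorem mul_norm_trilinearSum_pow_le {p : ℕ} [Fact p.Prime] (χ : MulChar (ZMod p) ℂ) {a b : ℤ}
    {β : ℕ → ℕ → ℂ} {K M N U V : ℕ} (hβ : ∀ k n, ‖β k n‖ ≤ 1) (hb : ¬(p : ℤ) ∣ b) (hN : N < p)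
    (hU : U < p) (hUV : U * V ≤ M) (n : ℕ) :
    ((U * V : ℕ) * ‖trilinearSum χ a b β K M N‖) ^ (2 * (n + 1)) ≤
      (#(quadBox K (2 * M) N U) : ℝ) ^ (2 * n) * #(collisions p a b K (2 * M) N U) *
        ∑ x, (2 * maxPartialSum χ (V + 1) x) ^ (2 * (n + 1)) := by
  have hb' : (b : ZMod p) ≠ 0 := by rwa [Ne, ZMod.intCast_zmod_eq_zero_iff_dvd]
  have hcoll : collisions p a b K (2 * M) N U =
      {t ∈ quadBox K (2 * M) N U ×ˢ quadBox K (2 * M) N U |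
        shiftPoint p a b t.1 = shiftPoint p a b t.2} := by
    refine filter_congr fun t ht => ?_
    rw [mem_product] at ht
    exact (shiftPoint_eq_shiftPoint_iff hb' (shiftDenom_ne_zero hN hU ht.1)
      (shiftDenom_ne_zero hN hU ht.2)).symm
  rw [hcoll]
  exact (pow_le_pow_left₀ (by positivity) (mul_norm_trilinearSum_le χ hβ hb' hN hU hUV) _).trans
    (sum_comp_pow_le_card_pow_mul_card_mul_sum_pow _ _
      (fun x => mul_nonneg zero_le_two (maxPartialSum_nonneg χ _ x)) n)

end Holder

section RealParameters

theorem half_le_natFloor {x : ℝ} (hx : 1 ≤ x) : x / 2 ≤ ⌊x⌋₊ := by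
  have h₁ : (1 : ℝ) ≤ ⌊x⌋₊ := mod_cast Nat.le_floor (by simpa using hx)
  linarith [Nat.lt_floor_add_one x]

theorem natFloor_lt_of_lt {x : ℝ} {n : ℕ} (hx : 0 ≤ x) (h : x < n) : ⌊x⌋₊ < n :=
  (Nat.floor_lt hx).2 h

theorem exists_forall_card_divisors_natAbs_le {ε : ℝ} (hε : 0 < ε) :
    ∃ C : ℝ, 0 < C ∧ ∀ p : ℕ, 2 ≤ p → ∀ x : ℝ, x ≤ (p : ℝ) ^ 5 → ∃ τ : ℕ,
      (τ : ℝ) ^ 4 ≤ C * (p : ℝ) ^ ε ∧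
        ∀ z : ℤ, |z| ≤ 2 * ⌊4 * x⌋₊ → #z.natAbs.divisors ≤ τ := by
  obtain ⟨D, hD, hdiv⟩ := exists_card_divisors_le_mul_rpow (ε := ε / 32) (by positivity)
  refine ⟨D ^ 4, by positivity, fun p hp x hx => ?_⟩
  set T := D * ((p : ℝ) ^ 8) ^ (ε / 32)
  have hT : 0 ≤ T := by positivity
  refine ⟨⌊T⌋₊, ?_, fun z hz => ?_⟩
  · calc (⌊T⌋₊ : ℝ) ^ 4 ≤ T ^ 4 := by gcongr; exact Nat.floor_le hT
      _ = D ^ 4 * (p : ℝ) ^ ε := by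
        rw [mul_pow, ← Real.rpow_natCast (p : ℝ), ← Real.rpow_mul p.cast_nonneg,
          ← Real.rpow_mul_natCast p.cast_nonneg]
        congr 2
        push_cast
        ring
  · rcases eq_or_ne z 0 with rfl | hz₀
    · simp
    have hp₂ : (2 : ℝ) ≤ p := mod_cast hp
    have hzp : (z.natAbs : ℝ) ≤ (p : ℝ) ^ 8 :=
      calc (z.natAbs : ℝ) ≤ 2 * ⌊4 * x⌋₊ := by
            rw [Nat.cast_natAbs]
            exact mod_cast hz
        _ ≤ 2 * (4 * (p : ℝ) ^ 5) := by
            gcongr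
            exact mod_cast Nat.floor_le_of_le (n := 4 * p ^ 5) (by push_cast; gcongr)
        _ = 2 ^ 3 * (p : ℝ) ^ 5 := by ring
        _ ≤ (p : ℝ) ^ 3 * (p : ℝ) ^ 5 := by gcongr
        _ = (p : ℝ) ^ 8 := by ring
    exact Nat.le_floor <|
      calc (#z.natAbs.divisors : ℝ) ≤ D * (z.natAbs : ℝ) ^ (ε / 32) :=
            hdiv _ (Int.natAbs_ne_zero.2 hz₀)
        _ ≤ D * ((p : ℝ) ^ 8) ^ (ε / 32) := by gcongr

theorem natCast_two_mul_div_add_one_le {x : ℝ} (hx : 0 ≤ x) (p : ℕ) :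
    ((2 * (⌊4 * x⌋₊ / p) + 1 : ℕ) : ℝ) ≤ 8 * (1 + x / p) := by
  have h : ((⌊4 * x⌋₊ / p : ℕ) : ℝ) ≤ 4 * x / p :=
    Nat.cast_div_le.trans (by gcongr; exact Nat.floor_le (by positivity))
  push_cast
  rw [mul_div_assoc] at h
  linarith

theorem two_mul_floor_le_natFloor {a b : ℤ} {K M N L : ℝ} (hK : 0 ≤ K) (hM : 0 ≤ M) (hN : 0 ≤ N)
    (hL : 0 ≤ L) :
    2 * ((|a| * ⌊K⌋₊ + |b| * (2 * ⌊M⌋₊ : ℕ) * ⌊N⌋₊) * (⌊L⌋₊ * ⌊N⌋₊)) ≤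
      (⌊4 * ((|(a : ℝ)| * K + |(b : ℝ)| * M * N) * L * N)⌋₊ : ℤ) := by
  have ha : |(a : ℝ)| * ⌊K⌋₊ ≤ 2 * (|(a : ℝ)| * K) :=
    (mul_le_mul_of_nonneg_left (Nat.floor_le hK) (abs_nonneg _)).trans
      (le_mul_of_one_le_left (by positivity) one_le_two)
  rw [Int.natCast_floor_eq_floor (a := 4 * _) (by positivity), Int.le_floor]
  push_cast
  calc 2 * ((|(a : ℝ)| * ⌊K⌋₊ + |(b : ℝ)| * (2 * ⌊M⌋₊) * ⌊N⌋₊) * (⌊L⌋₊ * ⌊N⌋₊))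
      ≤ 2 * ((2 * (|(a : ℝ)| * K) + |(b : ℝ)| * (2 * M) * N) * (L * N)) := by
        gcongr <;> exact Nat.floor_le ‹_›
    _ = _ := by ring

theorem exists_card_collisions_le {ε : ℝ} (hε : 0 < ε) :
    ∃ C : ℝ, 0 < C ∧ ∀ p : ℕ, p.Prime → ∀ K M N P : ℝ, 0 ≤ K → K < p → M < p → 1 ≤ N → N < p →
      1 ≤ P → P ≤ M → ∀ a b : ℤ, ¬(p : ℤ) ∣ a → b ≠ 0 →
      |(a : ℝ)| * K + |(b : ℝ)| * M * N ≤ (p : ℝ) ^ 3 →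
      (#(collisions p a b ⌊K⌋₊ (2 * ⌊M⌋₊) ⌊N⌋₊ ⌊M / P⌋₊) : ℝ) ≤
        C * (p : ℝ) ^ ε * ((N + K) * K * M ^ 2 / P *
          (1 + (|(a : ℝ)| * K + |(b : ℝ)| * M * N) * M * N / (p * P))) := by
  obtain ⟨D, hD, hdiv⟩ := exists_forall_card_divisors_natAbs_le hε
  refine ⟨32 * D, by positivity, fun p hp K M N P hK hKp hMp hN hNp hP hPM a b ha hb hR => ?_⟩
  set R := |(a : ℝ)| * K + |(b : ℝ)| * M * N
  have hM : 0 < M := by linarith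
  have hMP : M / P ≤ M := div_le_self hM.le hP
  have hMP₀ : 0 ≤ M / P := by positivity
  have hx₀ : 0 ≤ R * (M / P) * N := by positivity
  obtain ⟨τ, hτ, hdivτ⟩ := hdiv p hp.two_le (R * (M / P) * N) <|
    calc R * (M / P) * N ≤ (p : ℝ) ^ 3 * p * p := by gcongr; exact hMP.trans hMp.le
      _ = (p : ℝ) ^ 5 := by ring
  have hcard := card_collisions_le hp ha hb (natFloor_lt_of_lt hK hKp)
    (natFloor_lt_of_lt (by linarith) hNp) (natFloor_lt_of_lt hMP₀ (hMP.trans_lt hMp))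
    (Nat.floor_pos.2 hN) (Nat.floor_pos.2 ((one_le_div (by linarith)).2 hPM))
    ((Nat.floor_le_floor hMP).trans (Nat.le_mul_of_pos_left _ two_pos)) hdivτ
    (two_mul_floor_le_natFloor hK hM.le (by linarith) hMP₀)
  set Z := ⌊4 * (R * (M / P) * N)⌋₊
  calc _ ≤ ((2 * ((⌊N⌋₊ + ⌊K⌋₊) * ⌊K⌋₊ * ⌊M / P⌋₊ * (2 * ⌊M⌋₊) * (2 * (Z / p) + 1) * τ ^ 4)
          : ℕ) : ℝ) := mod_cast hcard
    _ = 2 * ((⌊N⌋₊ + ⌊K⌋₊) * ⌊K⌋₊ * ⌊M / P⌋₊ * (2 * ⌊M⌋₊) * (2 * (Z / p) + 1 : ℕ) * τ ^ 4) := by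
      simp only [Nat.cast_mul, Nat.cast_add, Nat.cast_pow, Nat.cast_ofNat]
    _ ≤ 2 * ((N + K) * K * (M / P) * (2 * M) * (8 * (1 + R * (M / P) * N / p)) *
          (D * (p : ℝ) ^ ε)) := by
      gcongr
      all_goals first
        | exact Nat.floor_le (by linarith)
        | exact natCast_two_mul_div_add_one_le hx₀ p
    _ = _ := by
      field_simp
      ring

/-- The quantity `Δ₁ ^ (2 r)`, where `P = p ^ (1 / (2 r))` and `R = |a| K + |b| M N`. -/
noncomputable def typeIFactor (p P K M N R : ℝ) : ℝ :=
  (1 + N / K) * (1 + R * M * N / (p * P)) * (√p * P / (M * N) ^ 2)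

theorem one_le_typeIFactor {p P K M N R : ℝ} (hP : 0 < P) (hK : 0 < K) (hM : 0 < M) (hMp : M ≤ p)
    (hN : 0 < N) (hNp : N ≤ p) (hp : 1 ≤ p) (hR : p ^ 3 ≤ R) :
    1 ≤ typeIFactor p P K M N R := by
  have hMN : M * N ≤ p ^ 2 := by nlinarith
  calc (1 : ℝ) ≤ p ^ 2 / (M * N) := (one_le_div (by positivity)).2 hMN
    _ = 1 * (p ^ 3 * M * N / (p * P)) * (1 * P / (M * N) ^ 2) := by field_simp
    _ ≤ (1 + N / K) * (1 + R * M * N / (p * P)) * (√p * P / (M * N) ^ 2) := by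
      have hfirst : 1 ≤ 1 + N / K := le_add_of_nonneg_right (by positivity)
      have hsecond : p ^ 3 * M * N / (p * P) ≤ 1 + R * M * N / (p * P) :=
        le_add_of_nonneg_of_le zero_le_one (by gcongr)
      have hsqrt : 1 ≤ √p := Real.one_le_sqrt.2 hp
      have hsecond₀ : 0 ≤ p ^ 3 * M * N / (p * P) := by positivity
      have hfactors : 0 ≤ (1 + N / K) * (1 + R * M * N / (p * P)) :=
        mul_nonneg (zero_le_one.trans hfirst) (hsecond₀.trans hsecond)
      gcongr

theorem norm_trilinearSum_le {p : ℕ} [Fact p.Prime] (χ : MulChar (ZMod p) ℂ) (a b : ℤ)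
    {β : ℕ → ℕ → ℂ} (hβ : ∀ k n, ‖β k n‖ ≤ 1) (K M N : ℕ) :
    ‖trilinearSum χ a b β K M N‖ ≤ K * M * N :=
  calc _ ≤ ∑ _k ∈ Icc 1 K, ∑ _m ∈ Icc 1 M, ∑ _n ∈ Icc 1 N, (1 : ℝ) :=
        norm_sum_le_of_le _ fun k _ => norm_sum_le_of_le _ fun _ _ => norm_sum_le_of_le _ fun _ _ =>
          (norm_mul_le _ _).trans (mul_le_one₀ (hβ k _) (norm_nonneg _) (norm_mulChar_le_one χ _))
    _ = _ := by
      simp only [sum_const, Nat.card_Icc, Nat.add_sub_cancel, nsmul_eq_mul, mul_one, mul_assoc]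

/-- Here `A` is the number of shifts, `B` the size of the box, `E` the number of collisions and
`F` the complete moment. -/
theorem pow_le_of_mul_pow_le {n : ℕ} {p P K M N R A S B E F cE cF : ℝ} (hP : 0 < P) (hK : 0 < K)
    (hM : 0 < M) (hN : 0 < N) (hS : 0 ≤ S) (hB : 0 ≤ B) (hE : 0 ≤ E) (hF : 0 ≤ F)
    (hMA : M / 4 ≤ A) (h : (A * S) ^ (2 * (n + 1)) ≤ B ^ (2 * n) * E * F)
    (hBle : B ≤ 2 * (K * M * N * (M / P)))
    (hEle : E ≤ cE * ((N + K) * K * M ^ 2 / P * (1 + R * M * N / (p * P))))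
    (hFle : F ≤ cF * (P ^ (2 * (n + 1)) * √p)) :
    S ^ (2 * (n + 1)) ≤ 8 ^ (2 * (n + 1)) * cE * cF * (K * M * N) ^ (2 * (n + 1)) *
      typeIFactor p P K M N R := by
  have hpos : 0 < (M / 4) ^ (2 * (n + 1)) := by positivity
  refine le_of_mul_le_mul_left ?_ hpos
  rw [← mul_pow, typeIFactor]
  set W := 1 + R * M * N / (p * P)
  calc (M / 4 * S) ^ (2 * (n + 1)) ≤ (A * S) ^ (2 * (n + 1)) := by gcongr
    _ ≤ B ^ (2 * n) * E * F := h
    _ ≤ 2 ^ (2 * (n + 1)) * (K * M * N * (M / P)) ^ (2 * n) * (E * F) := by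
      rw [mul_assoc]
      refine mul_le_mul_of_nonneg_right ?_ (mul_nonneg hE hF)
      calc B ^ (2 * n) ≤ (2 * (K * M * N * (M / P))) ^ (2 * n) := by gcongr
        _ = 2 ^ (2 * n) * (K * M * N * (M / P)) ^ (2 * n) := mul_pow _ _ _
        _ ≤ _ := by gcongr <;> norm_num
    _ ≤ 2 ^ (2 * (n + 1)) * (K * M * N * (M / P)) ^ (2 * n) *
          (cE * ((N + K) * K * M ^ 2 / P * W) * (cF * (P ^ (2 * (n + 1)) * √p))) :=
      mul_le_mul_of_nonneg_left (mul_le_mul hEle hFle hF (hE.trans hEle)) (by positivity)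
    _ = _ := by
      rw [show (8 : ℝ) = 4 * 2 by norm_num]
      simp only [mul_add, mul_one, pow_add, mul_pow, div_pow]
      field_simp
      ring

end RealParameters

section Assembly

theorem card_quadBox (K M N U : ℕ) : #(quadBox K M N U) = K * (M * (N * U)) := by
  simp only [quadBox, card_product, Nat.card_Icc, Nat.add_sub_cancel]

theorem card_quadBox_floor_le {K M N L : ℝ} (hK : 0 ≤ K) (hM : 0 ≤ M) (hN : 0 ≤ N) (hL : 0 ≤ L) :
    (#(quadBox ⌊K⌋₊ (2 * ⌊M⌋₊) ⌊N⌋₊ ⌊L⌋₊) : ℝ) ≤ 2 * (K * M * N * L) := by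
  rw [card_quadBox]
  push_cast
  calc (⌊K⌋₊ * (2 * ⌊M⌋₊ * (⌊N⌋₊ * ⌊L⌋₊)) : ℝ) ≤ K * (2 * M * (N * L)) := by
        gcongr <;> exact Nat.floor_le ‹_›
    _ = 2 * (K * M * N * L) := by ring

theorem quarter_le_floor_div_mul_floor {M P : ℝ} (hP : 1 ≤ P) (hPM : P ≤ M) :
    M / 4 ≤ (⌊M / P⌋₊ * ⌊P⌋₊ : ℕ) := by
  have hP₀ : 0 < P := by linarith
  calc M / 4 = M / P / 2 * (P / 2) := by field_simp; norm_num
    _ ≤ ⌊M / P⌋₊ * ⌊P⌋₊ := by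
      gcongr
      · exact half_le_natFloor ((one_le_div hP₀).2 hPM)
      · exact half_le_natFloor hP
    _ = _ := (Nat.cast_mul _ _).symm

theorem floor_div_mul_floor_le {M P : ℝ} (hM : 0 ≤ M) (hP : 0 < P) :
    ⌊M / P⌋₊ * ⌊P⌋₊ ≤ ⌊M⌋₊ := by
  refine Nat.le_floor ?_
  push_cast
  calc (⌊M / P⌋₊ * ⌊P⌋₊ : ℝ) ≤ M / P * P := by gcongr <;> exact Nat.floor_le (by positivity)
    _ = M := div_mul_cancel₀ M hP.ne'

theorem exists_sum_two_mul_maxPartialSum_pow_le {r : ℕ} (hr : r ≠ 0) {ε : ℝ} (hε : 0 < ε) :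
    ∃ C : ℝ, 0 < C ∧ ∀ (p : ℕ) [Fact p.Prime] (χ : MulChar (ZMod p) ℂ), χ ≠ 1 →
      ∀ P : ℝ, 1 ≤ P → P ^ (2 * r) = p →
        ∑ x, (2 * maxPartialSum χ (⌊P⌋₊ + 1) x) ^ (2 * r) ≤
          C * (p : ℝ) ^ ε * (P ^ (2 * r) * √p) := by
  obtain ⟨C, hC, hmoment⟩ := exists_sum_maxPartialSum_pow_le hr hε
  refine ⟨2 ^ (2 * r) * C, by positivity, fun p _ χ hχ P hP hPp => ?_⟩
  have hfloor : ⌊P⌋₊ ^ (2 * r) ≤ p := by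
    have : (⌊P⌋₊ : ℝ) ^ (2 * r) ≤ p := by
      rw [← hPp]
      gcongr
      exact Nat.floor_le (by linarith)
    exact mod_cast this
  simp only [mul_pow, ← mul_sum, mul_assoc]
  gcongr
  rw [hPp, ← mul_assoc]
  exact hmoment p χ hχ _ (Nat.floor_pos.2 hP).ne' hfloor

theorem exists_norm_trilinearSum_pow_le_of_le_cube {r : ℕ} (hr : r ≠ 0) {ε : ℝ} (hε : 0 < ε) :
    ∃ C : ℝ, 0 < C ∧ ∀ (p : ℕ) [Fact p.Prime], ∀ K M N P : ℝ, 0 < K → K < p → M < p → 1 ≤ N →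
      N < p → 1 ≤ P → P ^ (2 * r) = p → P ≤ M → ∀ a b : ℤ, ¬(p : ℤ) ∣ a → ¬(p : ℤ) ∣ b →
      |(a : ℝ)| * K + |(b : ℝ)| * M * N ≤ (p : ℝ) ^ 3 → ∀ χ : MulChar (ZMod p) ℂ, χ ≠ 1 →
      ∀ β : ℕ → ℕ → ℂ, (∀ k n, ‖β k n‖ ≤ 1) →
      ‖trilinearSum χ a b β ⌊K⌋₊ ⌊M⌋₊ ⌊N⌋₊‖ ^ (2 * r) ≤ C * (p : ℝ) ^ ε * (K * M * N) ^ (2 * r) *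
        typeIFactor p P K M N (|(a : ℝ)| * K + |(b : ℝ)| * M * N) := by
  obtain ⟨n, rfl⟩ := Nat.exists_eq_add_one_of_ne_zero hr
  obtain ⟨C₁, hC₁, hcoll⟩ := exists_card_collisions_le (half_pos hε)
  obtain ⟨C₂, hC₂, hmoment⟩ := exists_sum_two_mul_maxPartialSum_pow_le hr (half_pos hε)
  refine ⟨8 ^ (2 * (n + 1)) * C₁ * C₂, by positivity, ?_⟩
  intro p hp K M N P hK hKp hMp hN hNp hP hPp hPM a b ha hb hR χ hχ β hβ
  have hp₀ : (0 : ℝ) < p := hK.trans hKp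
  have hP₀ : 0 < P := zero_lt_one.trans_le hP
  have hM : 0 < M := hP₀.trans_le hPM
  have hN₀ : 0 < N := zero_lt_one.trans_le hN
  have hL : 0 ≤ M / P := by positivity
  have hb₀ : b ≠ 0 := fun h => hb (h ▸ dvd_zero _)
  have hholder := mul_norm_trilinearSum_pow_le χ (a := a) (K := ⌊K⌋₊) hβ hb
    (natFloor_lt_of_lt hN₀.le hNp) (natFloor_lt_of_lt hL ((div_le_self hM.le hP).trans_lt hMp))
    (floor_div_mul_floor_le hM.le hP₀) n
  calc _ ≤ 8 ^ (2 * (n + 1)) * (C₁ * (p : ℝ) ^ (ε / 2)) * (C₂ * (p : ℝ) ^ (ε / 2)) *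
          (K * M * N) ^ (2 * (n + 1)) * typeIFactor p P K M N _ :=
        pow_le_of_mul_pow_le hP₀ hK hM hN₀ (norm_nonneg _) (Nat.cast_nonneg _) (Nat.cast_nonneg _)
          (sum_nonneg fun x _ => pow_nonneg (mul_nonneg zero_le_two (maxPartialSum_nonneg χ _ x)) _)
          (quarter_le_floor_div_mul_floor hP hPM) hholder
          (card_quadBox_floor_le hK.le hM.le hN₀.le hL)
          (hcoll p hp.out K M N P hK.le hKp hMp hN hNp hP hPM a b ha hb₀ hR)
          (hmoment p χ hχ P hP hPp)
    _ = _ := by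
      rw [show (p : ℝ) ^ ε = (p : ℝ) ^ (ε / 2) * (p : ℝ) ^ (ε / 2) by
        rw [← Real.rpow_add hp₀, add_halves]]
      ring

theorem exists_norm_trilinearSum_pow_le {r : ℕ} (hr : r ≠ 0) {ε : ℝ} (hε : 0 < ε) :
    ∃ C : ℝ, 1 ≤ C ∧ ∀ (p : ℕ) [Fact p.Prime], ∀ K M N P : ℝ, 0 < K → K < p → M < p → 1 ≤ N →
      N < p → 1 ≤ P → P ^ (2 * r) = p → P ≤ M → ∀ a b : ℤ, ¬(p : ℤ) ∣ a → ¬(p : ℤ) ∣ b →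
      ∀ χ : MulChar (ZMod p) ℂ, χ ≠ 1 → ∀ β : ℕ → ℕ → ℂ, (∀ k n, ‖β k n‖ ≤ 1) →
      ‖trilinearSum χ a b β ⌊K⌋₊ ⌊M⌋₊ ⌊N⌋₊‖ ^ (2 * r) ≤ C * (p : ℝ) ^ ε * (K * M * N) ^ (2 * r) *
        typeIFactor p P K M N (|(a : ℝ)| * K + |(b : ℝ)| * M * N) := by
  obtain ⟨C, hC, hsmall⟩ := exists_norm_trilinearSum_pow_le_of_le_cube hr hε
  refine ⟨1 + C, le_add_of_nonneg_right hC.le, ?_⟩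
  intro p hp K M N P hK hKp hMp hN hNp hP hPp hPM a b ha hb χ hχ β hβ
  have hp₁ : (1 : ℝ) ≤ p := mod_cast hp.out.one_le
  have hM : 0 < M := by linarith
  rcases le_total (|(a : ℝ)| * K + |(b : ℝ)| * M * N) ((p : ℝ) ^ 3) with hR | hR
  · refine (hsmall p K M N P hK hKp hMp hN hNp hP hPp hPM a b ha hb hR χ hχ β hβ).trans ?_
    have : 0 ≤ typeIFactor p P K M N (|(a : ℝ)| * K + |(b : ℝ)| * M * N) := by
      unfold typeIFactor
      positivity
    gcongr
    exact le_add_of_nonneg_left zero_le_one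
  · have hfactor := one_le_typeIFactor (by linarith) hK hM hMp.le (by linarith) hNp.le hp₁ hR
      (P := P)
    calc _ ≤ (⌊K⌋₊ * ⌊M⌋₊ * ⌊N⌋₊ : ℝ) ^ (2 * r) := by
          gcongr
          exact norm_trilinearSum_le χ a b hβ _ _ _
      _ ≤ 1 * 1 * (K * M * N) ^ (2 * r) * 1 := by
          rw [one_mul, one_mul, mul_one]
          gcongr <;> exact Nat.floor_le (by linarith)
      _ ≤ _ := by
          gcongr
          · exact le_add_of_nonneg_right hC.le
          · exact Real.one_le_rpow hp₁ hε.le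

end Assembly

section Exponents

theorem rpow_one_div_pow {x : ℝ} (hx : 0 ≤ x) {n : ℕ} (hn : n ≠ 0) {s : ℝ} (hs : s = n) :
    (x ^ (1 / s)) ^ n = x := by
  rw [hs, one_div, Real.rpow_inv_natCast_pow hx hn]

theorem rpow_one_div_four_mul_pow {p : ℝ} (hp : 0 < p) (M N : ℝ) {r : ℕ} (hr : r ≠ 0) :
    ((p ^ (1 + 1 / (r : ℝ)) / (M ^ 4 * N ^ 4)) ^ (1 / (4 * (r : ℝ)))) ^ (2 * r) =
      √p * p ^ (1 / (2 * (r : ℝ))) / (M * N) ^ 2 := by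
  have hbase : p ^ (1 + 1 / (r : ℝ)) / (M ^ 4 * N ^ 4) =
      p * (p ^ (1 / (2 * (r : ℝ))) / (M * N) ^ 2) ^ 2 := by
    rw [Real.rpow_add hp, Real.rpow_one, div_pow, ← Real.rpow_mul_natCast hp.le]
    field_simp
    push_cast
    ring_nf
  rw [← Real.rpow_mul_natCast (by rw [hbase]; positivity), hbase,
    show 1 / (4 * (r : ℝ)) * (2 * r : ℕ) = 1 / 2 by push_cast; field_simp; norm_num,
    ← Real.sqrt_eq_rpow, Real.sqrt_mul hp.le, Real.sqrt_sq (by positivity), mul_div_assoc]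

theorem rpow_mul_rpow_mul_rpow_pow_eq_typeIFactor {p K M N R : ℝ} (hp : 0 < p) (hK : 0 ≤ K)
    (hM : 0 ≤ M) (hN : 0 ≤ N) (hR : 0 ≤ R) {r : ℕ} (hr : r ≠ 0) :
    ((1 + N / K) ^ (1 / (2 * (r : ℝ))) *
        (1 + R * M * N * p ^ (-1 - 1 / (2 * (r : ℝ)))) ^ (1 / (2 * (r : ℝ))) *
        (p ^ (1 + 1 / (r : ℝ)) / (M ^ 4 * N ^ 4)) ^ (1 / (4 * (r : ℝ)))) ^ (2 * r) =
      typeIFactor p (p ^ (1 / (2 * (r : ℝ)))) K M N R := by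
  have h2r : 2 * r ≠ 0 := mul_ne_zero two_ne_zero hr
  have hcast : 2 * (r : ℝ) = (2 * r : ℕ) := by push_cast; rfl
  have hinv : p ^ (-1 - 1 / (2 * (r : ℝ))) = 1 / (p * p ^ (1 / (2 * (r : ℝ)))) := by
    rw [Real.rpow_sub hp, Real.rpow_neg_one]
    field_simp
  rw [mul_pow, mul_pow, rpow_one_div_four_mul_pow hp M N hr,
    rpow_one_div_pow (by positivity) h2r hcast, rpow_one_div_pow (by positivity) h2r hcast, hinv,
    mul_one_div, typeIFactor]

end Exponents

end CharSum

/-- Theorem 2.1 (Type I trilinear character sum bound). -/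
theorem trilinear_typeI (r : ℕ) (hr : 0 < r) (ε : ℝ) (hε : 0 < ε) :
    ∃ C : ℝ, 0 < C ∧ ∀ (p : ℕ), p.Prime →
      ∀ (K M N : ℝ), 1 < K → (K : ℝ) < p → 1 < M → (M : ℝ) < p → 1 < N → (N : ℝ) < p →
      M > 4 * (p : ℝ) ^ ((1 : ℝ) / (2 * (r : ℝ))) →
      ∀ (a b : ℤ), ¬ ((p : ℤ) ∣ a * b) →
      ∀ (χ : MulChar (ZMod p) ℂ), χ ≠ 1 →
      ∀ (β : ℕ → ℕ → ℂ), (∀ k n, ‖β k n‖ ≤ 1) →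
      ‖∑ k ∈ Icc 1 ⌊K⌋₊, ∑ m ∈ Icc 1 ⌊M⌋₊, ∑ n ∈ Icc 1 ⌊N⌋₊,
          β k n * χ ((a * k + b * m * n : ℤ) : ZMod p)‖ ≤
        C * (p : ℝ) ^ ε * (K * M * N) *
          ((1 + N / K) ^ ((1 : ℝ) / (2 * (r : ℝ))) *
            (1 + ((|a| : ℝ) * K + (|b| : ℝ) * M * N) * M * N *
              (p : ℝ) ^ (-1 - 1 / (2 * (r : ℝ)) : ℝ)) ^ ((1 : ℝ) / (2 * (r : ℝ))) *
            ((p : ℝ) ^ (1 + 1 / (r : ℝ) : ℝ) / (M ^ 4 * N ^ 4)) ^ ((1 : ℝ) / (4 * (r : ℝ)))) := by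
  have hr₀ : r ≠ 0 := hr.ne'
  have hcast : 2 * (r : ℝ) = (2 * r : ℕ) := by push_cast; rfl
  have hε₂ : 0 < 2 * r * ε := by positivity
  obtain ⟨C, hC, hpow⟩ := CharSum.exists_norm_trilinearSum_pow_le hr₀ hε₂
  refine ⟨C, zero_lt_one.trans_le hC, ?_⟩
  intro p hp K M N hK hKp hM hMp hN hNp hMP a b hab χ hχ β hβ
  have : Fact p.Prime := ⟨hp⟩
  have hp₀ : (0 : ℝ) < p := by linarith
  have ha : ¬(p : ℤ) ∣ a := fun h => hab (h.mul_right b)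
  have hb : ¬(p : ℤ) ∣ b := fun h => hab (h.mul_left a)
  have hP : 1 ≤ (p : ℝ) ^ (1 / (2 * (r : ℝ))) :=
    Real.one_le_rpow (by linarith) (by positivity)
  refine le_of_pow_le_pow_left₀ (n := 2 * r) (by positivity) (by positivity) ?_
  rw [mul_pow, mul_pow, mul_pow C, ← Real.rpow_mul_natCast hp₀.le,
    CharSum.rpow_mul_rpow_mul_rpow_pow_eq_typeIFactor hp₀ (by linarith) (by linarith)
      (by linarith) (by positivity) hr₀, ← hcast, mul_comm ε]
  refine (hpow p K M N _ (by linarith) hKp hMp hN.le hNp hP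
    (CharSum.rpow_one_div_pow hp₀.le (by positivity) hcast) (by linarith) a b ha hb χ hχ β
    hβ).trans ?_
  unfold CharSum.typeIFactor
  gcongr
  exact le_self_pow₀ hC (by positivity)
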